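/- arXiv:0806.3522 — 11 statements merged into one kernel-verified Lean document; each statement's English description precedes it below -/
import Mathlib

section
/- For every a ∈ 𝔤 there exists a unique smooth curve α : ℝ → 𝔤, defined on all of ℝ, satisfying α'(t) = -D_{α(t)} α(t) for all t and α(0) = a; that is, the geodesic flow of the Riemannian Lie algebra (𝔤, ⟨·,·⟩) is complete. -/
open scoped InnerProductSpace Manifold ContDiff

/-- A quadratic vector field orthogonal to the radial direction has integral curves
on every bounded interval. -/
lemma geodesic_aux_interval
    {G : Type*} [NormedAddCommGroup G] [InnerProductSpace ℝ G] [FiniteDimensional ℝ G]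
    (v : G → G) (hv : ContDiff ℝ 1 v) (horth : ∀ x, ⟪x, v x⟫_ℝ = 0) (a : G) (T : ℝ) (hT : 0 < T) :
    ∃ α : ℝ → G, α 0 = a ∧ ∀ t ∈ Set.Ioo (-T) T, HasDerivAt α (v (α t)) t := by
  have : CompleteSpace G := FiniteDimensional.complete ℝ G
  let φ : ContDiffBump (0 : G) := ⟨‖a‖ + 1, ‖a‖ + 2, by positivity, by linarith⟩
  let w : G → G := fun x => φ x • v x
  have hw : ContDiff ℝ 1 w := φ.contDiff.smul hv
  have hws : HasCompactSupport w := φ.hasCompactSupport.smul_right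
  obtain ⟨K, hK⟩ := ContDiff.lipschitzWith_of_hasCompactSupport hws hw (by simp)
  obtain ⟨C, hC⟩ := hws.exists_bound_of_continuous hw.continuous
  have hC0 : 0 ≤ C := (norm_nonneg _).trans (hC 0)
  let L : NNReal := ⟨C, hC0⟩
  let T' : NNReal := ⟨T, hT.le⟩
  have h0 : (0 : ℝ) ∈ Set.Icc (-T) T := ⟨by linarith, hT.le⟩
  have hpl : IsPicardLindelof (fun _ => w) (⟨0, h0⟩ : Set.Icc (-T) T) a (L * T') 0 L K := by
    refine IsPicardLindelof.of_time_independent (fun x _ => hC x) hK.lipschitzOnWith ?_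
    have hLT : ((L * T' : NNReal) : ℝ) = C * T := rfl
    have hL : (L : ℝ) = C := rfl
    rw [hLT, hL]
    simp
  obtain ⟨α, hα0, hα⟩ := hpl.exists_eq_forall_mem_Icc_hasDerivWithinAt₀
  have hα0' : α 0 = a := hα0
  have hd : ∀ t ∈ Set.Ioo (-T) T, HasDerivAt α (w (α t)) t := fun t ht =>
    (hα t (Set.Ioo_subset_Icc_self ht)).hasDerivAt (Icc_mem_nhds ht.1 ht.2)
  have hn : ∀ t ∈ Set.Ioo (-T) T, HasDerivAt (fun s => ‖α s‖ ^ 2) 0 t := by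
    intro t ht
    have := (hd t ht).norm_sq
    simpa [w, inner_smul_right, horth] using this
  refine ⟨α, hα0', fun t ht => ?_⟩
  have hc : ‖α t‖ ^ 2 = ‖α 0‖ ^ 2 :=
    isOpen_Ioo.is_const_of_deriv_eq_zero isPreconnected_Ioo
      (f := fun s => ‖α s‖ ^ 2)
      (fun s hs => (hn s hs).differentiableAt.differentiableWithinAt)
      (fun s hs => (hn s hs).deriv) ht ⟨by linarith, hT⟩
  have hc' : ‖α t‖ = ‖a‖ := by
    rw [hα0'] at hc
    exact (sq_eq_sq₀ (norm_nonneg _) (norm_nonneg _)).1 hc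
  have h1 : φ (α t) = 1 := φ.one_of_mem_closedBall (by simp [φ, hc'])
  have := hd t ht
  simpa [w, h1] using this



/-- For every `a ∈ 𝔤` there exists a unique smooth curve `α : ℝ → 𝔤`,
defined on all of `ℝ`, satisfying the geodesic equation `α' t = -D (α t) (α t)` for all `t`
and `α 0 = a`: the geodesic flow of the Riemannian Lie algebra `(𝔤, ⟪·,·⟫)` is complete. -/
theorem geodesic_flow_complete
    {G : Type*} [NormedAddCommGroup G] [InnerProductSpace ℝ G] [FiniteDimensional ℝ G]
    (lie : G →ₗ[ℝ] G →ₗ[ℝ] G)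
    (hanti : ∀ u : G, lie u u = 0)
    (hjac : ∀ u v w : G, lie u (lie v w) = lie (lie u v) w + lie v (lie u w))
    (D : G →ₗ[ℝ] G →ₗ[ℝ] G)
    (hD : ∀ u v w : G,
      2 * ⟪D u v, w⟫_ℝ = ⟪lie u v, w⟫_ℝ + ⟪lie w u, v⟫_ℝ + ⟪lie w v, u⟫_ℝ) :
    ∀ a : G, ∃! α : ℝ → G,
      (∀ t : ℝ, HasDerivAt α (-(D (α t) (α t))) t) ∧ α 0 = a := by

  intro a
  have : CompleteSpace G := FiniteDimensional.complete ℝ G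
  let v : G → G := fun x => -(D x x)
  have hv : ContDiff ℝ 1 v := by
    have h : ContDiff ℝ 1 (fun x : G => (LinearMap.toContinuousLinearMap
      ((LinearMap.toContinuousLinearMap : (G →ₗ[ℝ] G) ≃ₗ[ℝ] (G →L[ℝ] G)).toLinearMap ∘ₗ D)) x x) :=
      (ContinuousLinearMap.contDiff _).clm_apply contDiff_id
    exact h.neg
  have horth : ∀ x, ⟪x, v x⟫_ℝ = 0 := by
    intro x
    have := hD x x x
    simp only [hanti, inner_zero_left] at this
    simp only [v, inner_neg_right]
    rw [real_inner_comm]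
    linarith
  have hvM := (contMDiff_vectorSpace_iff_contDiff (𝕜 := ℝ) (E := G) (n := 1) (V := v)).2 hv
  have key : ∀ γ : ℝ → G, IsMIntegralCurve (I := 𝓘(ℝ, G)) γ v ↔
      ∀ t, HasDerivAt γ (-(D (γ t) (γ t))) t := by
    intro γ
    refine forall_congr' fun t => ?_
    rw [hasDerivAt_iff_hasFDerivAt]
    exact hasMFDerivAt_iff_hasFDerivAt
  obtain ⟨γ, hγ0, hγ⟩ := (exists_isMIntegralCurve_iff_exists_isMIntegralCurveOn_Ioo hvM a).2 (by
    intro T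
    rcases le_or_gt T 0 with hT | hT
    · refine ⟨fun _ => a, rfl, fun t ht => ?_⟩
      exact absurd (ht.1.trans ht.2) (by linarith)
    · obtain ⟨α, h0, h⟩ := geodesic_aux_interval v hv horth a T hT
      refine ⟨α, h0, fun t ht => ?_⟩
      exact (hasMFDerivAt_iff_hasFDerivAt.2
        (hasDerivAt_iff_hasFDerivAt.1 (h t ht))).hasMFDerivWithinAt)
  refine ⟨γ, ⟨(key γ).1 hγ, hγ0⟩, ?_⟩
  rintro β ⟨hβ, hβ0⟩
  exact isMIntegralCurve_Ioo_eq_of_contMDiff_boundaryless (t₀ := 0) hvM ((key β).2 hβ) hγ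
    (hβ0.trans hγ0.symm)
end

section
/- For every a ∈ 𝔤: the trace of the linear map v ↦ D_a v is zero, and the trace of the linear map v ↦ D_v a equals -Tr(ad_a), where ad_a(v) = [a,v]. -/
open scoped InnerProductSpace

/-- For every `a ∈ 𝔤`: the trace of the linear map `v ↦ D a v` is zero,
and the trace of the linear map `v ↦ D v a` equals `-Tr(ad a)`, where `ad a v = [a, v]`.
Here `D` is the Levi-Civita product of the Riemannian Lie algebra `(𝔤, ⟪·,·⟫)`. -/
theorem trace_levi_civita
    {G : Type*} [NormedAddCommGroup G] [InnerProductSpace ℝ G] [FiniteDimensional ℝ G]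
    (lie : G →ₗ[ℝ] G →ₗ[ℝ] G)
    (hanti : ∀ u : G, lie u u = 0)
    (hjac : ∀ u v w : G, lie u (lie v w) = lie (lie u v) w + lie v (lie u w))
    (D : G →ₗ[ℝ] G →ₗ[ℝ] G)
    (hD : ∀ u v w : G,
      2 * ⟪D u v, w⟫_ℝ = ⟪lie u v, w⟫_ℝ + ⟪lie w u, v⟫_ℝ + ⟪lie w v, u⟫_ℝ) :
    ∀ a : G,
      LinearMap.trace ℝ G (D a) = 0 ∧
      LinearMap.trace ℝ G (D.flip a) = -(LinearMap.trace ℝ G (lie a)) := by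
  intro a
  have hskew : ∀ u v : G, lie u v = -lie v u := by
    intro u v
    have h := hanti (u + v)
    simp only [map_add, LinearMap.add_apply, hanti, zero_add, add_zero] at h
    rw [add_comm] at h
    exact eq_neg_of_add_eq_zero_left h
  have b := stdOrthonormalBasis ℝ G
  constructor
  · rw [LinearMap.trace_eq_sum_inner _ b]
    refine Finset.sum_eq_zero fun i _ => ?_
    have h := hD a (b i) (b i)
    rw [hskew (b i) a, hanti, inner_neg_left, inner_zero_left] at h
    rw [real_inner_comm]
    linarith
  · rw [LinearMap.trace_eq_sum_inner _ b, LinearMap.trace_eq_sum_inner _ b,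
      ← Finset.sum_neg_distrib]
    refine Finset.sum_congr rfl fun i _ => ?_
    have h := hD (b i) a (b i)
    rw [hskew (b i) a, hanti, inner_neg_left, inner_zero_left] at h
    rw [LinearMap.flip_apply, real_inner_comm, real_inner_comm (lie a (b i))]
    linarith
end

section
/- For every a ∈ 𝔤, the divergence of the geodesic vector field X_E at a, i.e. the trace of the Fréchet derivative of X_E at the point a, equals Tr(ad_a), where ad_a(v) = [a,v]. -/
open scoped InnerProductSpace

/-- For every `a ∈ 𝔤`, the divergence of the geodesic vector field
`X_E a = -D a a` at `a`, i.e. the trace of the Fréchet derivative of `X_E` at `a`,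
equals `Tr(ad a)`, where `ad a v = [a, v]`. -/
theorem divergence_geodesic_field
    {G : Type*} [NormedAddCommGroup G] [InnerProductSpace ℝ G] [FiniteDimensional ℝ G]
    (lie : G →ₗ[ℝ] G →ₗ[ℝ] G)
    (hanti : ∀ u : G, lie u u = 0)
    (hjac : ∀ u v w : G, lie u (lie v w) = lie (lie u v) w + lie v (lie u w))
    (D : G →ₗ[ℝ] G →ₗ[ℝ] G)
    (hD : ∀ u v w : G,
      2 * ⟪D u v, w⟫_ℝ = ⟪lie u v, w⟫_ℝ + ⟪lie w u, v⟫_ℝ + ⟪lie w v, u⟫_ℝ) :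
    ∀ a : G,
      LinearMap.trace ℝ G (fderiv ℝ (fun x : G => -(D x x)) a).toLinearMap =
        LinearMap.trace ℝ G (lie a) := by
  intro a
  have hskew : ∀ u v : G, lie u v = -lie v u := by
    intro u v
    have h := hanti (u + v)
    simp only [map_add, LinearMap.add_apply, hanti, zero_add, add_zero] at h
    exact eq_neg_of_add_eq_zero_right h
  let B : G →L[ℝ] G →L[ℝ] G := LinearMap.toContinuousLinearMap
    ((LinearMap.toContinuousLinearMap : (G →ₗ[ℝ] G) ≃ₗ[ℝ] (G →L[ℝ] G)).toLinearMap ∘ₗ D)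
  have hB : ∀ u v : G, B u v = D u v := fun u v => rfl
  have hder : HasFDerivAt (fun x : G => -(D x x)) _ a :=
    (B.hasFDerivAt_of_bilinear (hasFDerivAt_id a) (hasFDerivAt_id a)).neg
  rw [hder.fderiv]
  let b := stdOrthonormalBasis ℝ G
  rw [LinearMap.trace_eq_sum_inner _ b, LinearMap.trace_eq_sum_inner _ b]
  refine Finset.sum_congr rfl fun i _ => ?_
  have h1 := hD a (b i) (b i)
  have h2 := hD (b i) a (b i)
  rw [hskew (b i) a] at h1 h2
  simp only [hanti, inner_neg_left, inner_zero_left] at h1 h2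
  simp [hB, inner_add_right]
  rw [real_inner_comm (D a (b i)), real_inner_comm (D (b i) a), real_inner_comm (lie a (b i))] 
  linarith
end

section
/- The geodesic vector field X_E has vanishing divergence at every point of 𝔤 (i.e. the trace of the Fréchet derivative of X_E is zero everywhere) if and only if 𝔤 is unimodular, i.e. Tr(ad_u) = 0 for every u ∈ 𝔤. -/
open scoped InnerProductSpace

/-- The geodesic vector field `X_E a = -D a a` has vanishing divergence at
every point of `𝔤` (the trace of its Fréchet derivative is zero everywhere) if and only if
`𝔤` is unimodular, i.e. `Tr(ad u) = 0` for every `u ∈ 𝔤`. -/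
theorem divergence_free_iff_unimodular
    {G : Type*} [NormedAddCommGroup G] [InnerProductSpace ℝ G] [FiniteDimensional ℝ G]
    (lie : G →ₗ[ℝ] G →ₗ[ℝ] G)
    (hanti : ∀ u : G, lie u u = 0)
    (hjac : ∀ u v w : G, lie u (lie v w) = lie (lie u v) w + lie v (lie u w))
    (D : G →ₗ[ℝ] G →ₗ[ℝ] G)
    (hD : ∀ u v w : G,
      2 * ⟪D u v, w⟫_ℝ = ⟪lie u v, w⟫_ℝ + ⟪lie w u, v⟫_ℝ + ⟪lie w v, u⟫_ℝ) :
    (∀ a : G,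
        LinearMap.trace ℝ G (fderiv ℝ (fun x : G => -(D x x)) a).toLinearMap = 0) ↔
      (∀ u : G, LinearMap.trace ℝ G (lie u) = 0) := by
  have key : ∀ a : G,
      LinearMap.trace ℝ G (fderiv ℝ (fun x : G => -(D x x)) a).toLinearMap
        = LinearMap.trace ℝ G (lie a) := by
    intro a
    let B : G →L[ℝ] G →L[ℝ] G := LinearMap.toContinuousLinearMap
      ((LinearMap.toContinuousLinearMap : (G →ₗ[ℝ] G) ≃ₗ[ℝ] (G →L[ℝ] G)).toLinearMap ∘ₗ D)
    have hB : ∀ x y, B x y = D x y := fun x y => rfl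
    have h1 : HasFDerivAt (fun x : G => -(B x x)) _ a :=
      ((B.hasFDerivAt (x := a)).clm_apply (hasFDerivAt_id a)).neg
    have h2 : ∀ h : G, fderiv ℝ (fun x : G => -(D x x)) a h = -(D a h + D h a) := by
      intro h
      have h3 : fderiv ℝ (fun x : G => -(D x x)) a = _ := h1.fderiv
      rw [h3]
      simp [hB]
    rw [LinearMap.trace_eq_sum_inner _ (stdOrthonormalBasis ℝ G),
      LinearMap.trace_eq_sum_inner _ (stdOrthonormalBasis ℝ G)]
    refine Finset.sum_congr rfl fun i _ => ?_
    generalize stdOrthonormalBasis ℝ G i = e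
    have hs : lie e a = -(lie a e) := by
      have h := hanti (e + a)
      simp only [map_add, LinearMap.add_apply, hanti, zero_add, add_zero] at h
      first
        | exact eq_neg_of_add_eq_zero_left h
        | exact eq_neg_of_add_eq_zero_right h
    have e1 := hD a e e
    have e2 := hD e a e
    rw [ContinuousLinearMap.coe_coe, h2, real_inner_comm, inner_neg_left, inner_add_left,
      real_inner_comm (lie a e) e]
    simp only [hs, hanti, inner_neg_left, inner_zero_left] at e1 e2
    linarith
  simp only [key]
end

section
/- Let α₀ : [0,1] → 𝔤 be a smooth curve and β₀ : [0,1] → 𝔤 a smooth curve with β₀(0) = β₀(1) = 0. Then there exist smooth maps α, β : ℝ × [0,1] → 𝔤 such that α(0,·) = α₀, β(0,·) = β₀, β(ε,0) = β(ε,1) = 0 for all ε, and Δ(α,β) = 0, i.e. ∂_ε α = ∂_t β + [α,β]; in other words, α is an A-homotopy with fixed end-points starting at α₀ whose transverse variation restricts to β₀ at ε = 0. -/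
open scoped InnerProductSpace

/-- Partial derivative in the second variable `t` of a map `ℝ² → G`. -/
noncomputable def partialT {G : Type*} [NormedAddCommGroup G] [NormedSpace ℝ G]
    (f : ℝ × ℝ → G) (p : ℝ × ℝ) : G :=
  fderiv ℝ f p (0, 1)

/-- Partial derivative in the first variable `ε` of a map `ℝ² → G`. -/
noncomputable def partialE {G : Type*} [NormedAddCommGroup G] [NormedSpace ℝ G]
    (f : ℝ × ℝ → G) (p : ℝ × ℝ) : G :=
  fderiv ℝ f p (1, 0)

/-- Smooth solution of a linear ODE with constant coefficients depending on a parameter. -/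
theorem linear_flow_aux {V : Type*} [NormedAddCommGroup V] [NormedSpace ℝ V] [CompleteSpace V]
    (M : ℝ → (V →L[ℝ] V)) (hM : ContDiff ℝ (⊤ : ℕ∞) M)
    (v : ℝ → V) (hv : ContDiff ℝ (⊤ : ℕ∞) v) :
    ∃ F : ℝ × ℝ → V, ContDiff ℝ (⊤ : ℕ∞) F ∧ (∀ t, F (0, t) = v t) ∧
      ∀ ε t, HasDerivAt (fun e => F (e, t)) (M t (F (ε, t))) ε := by
  have hexp : ContDiff ℝ (⊤ : ℕ∞) (NormedSpace.exp : (V →L[ℝ] V) → (V →L[ℝ] V)) := by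
    rw [contDiff_iff_contDiffAt]
    intro x
    exact (NormedSpace.exp_analytic (𝕂 := ℝ) x).contDiffAt
  let E : ℝ × ℝ → (V →L[ℝ] V) := fun p => NormedSpace.exp (p.1 • M p.2)
  have hE : ContDiff ℝ (⊤ : ℕ∞) E :=
    hexp.comp (contDiff_fst.smul (hM.comp contDiff_snd))
  refine ⟨fun p => E p (v p.2), hE.clm_apply (hv.comp contDiff_snd), ?_, ?_⟩
  · intro t
    simp [E]
  · intro ε t
    have h := hasDerivAt_exp_smul_const' (𝕂 := ℝ) (M t) ε
    exact (h.clm_apply (hasDerivAt_const ε (v t))).congr_deriv (by simp [E])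

/-- Let `α₀ : [0,1] → 𝔤` be a smooth curve and `β₀ : [0,1] → 𝔤` a smooth
curve with `β₀ 0 = β₀ 1 = 0`.  Then there exist smooth maps `α β : ℝ × [0,1] → 𝔤` such that
`α(0,·) = α₀`, `β(0,·) = β₀`, `β(ε,0) = β(ε,1) = 0` for all `ε`, and `Δ(α,β) = 0`, i.e.
`∂_ε α = ∂ₜ β + [α,β]`: `α` is an `A`-homotopy with fixed end-points starting at `α₀`
whose transverse variation restricts to `β₀` at `ε = 0`. -/
theorem exists_homotopy_with_given_transverse_variation
    {G : Type*} [NormedAddCommGroup G] [InnerProductSpace ℝ G] [FiniteDimensional ℝ G]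
    (lie : G →ₗ[ℝ] G →ₗ[ℝ] G)
    (hanti : ∀ u : G, lie u u = 0)
    (hjac : ∀ u v w : G, lie u (lie v w) = lie (lie u v) w + lie v (lie u w))
    (α₀ β₀ : ℝ → G) (hα₀ : ContDiff ℝ (⊤ : ℕ∞) α₀) (hβ₀ : ContDiff ℝ (⊤ : ℕ∞) β₀)
    (hβ₀0 : β₀ 0 = 0) (hβ₀1 : β₀ 1 = 0) :
    ∃ α β : ℝ × ℝ → G, ContDiff ℝ (⊤ : ℕ∞) α ∧ ContDiff ℝ (⊤ : ℕ∞) β ∧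
      (∀ t ∈ Set.Icc (0 : ℝ) 1, α (0, t) = α₀ t ∧ β (0, t) = β₀ t) ∧
      (∀ ε : ℝ, β (ε, 0) = 0 ∧ β (ε, 1) = 0) ∧
      (∀ p : ℝ × ℝ, p.2 ∈ Set.Icc (0 : ℝ) 1 →
        partialE α p = partialT β p + lie (α p) (β p)) := by
  have hdb : ContDiff ℝ (⊤ : ℕ∞) (deriv β₀) := by
    have h := (contDiff_infty_iff_deriv (f := β₀)).1 hβ₀
    exact h.2
  let L : G →L[ℝ] (G →L[ℝ] G) := LinearMap.toContinuousLinearMap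
    ((LinearMap.toContinuousLinearMap : (G →ₗ[ℝ] G) ≃ₗ[ℝ] (G →L[ℝ] G)).toLinearMap ∘ₗ lie.flip)
  have hL : ∀ u v, L u v = lie v u := fun u v => rfl
  let M : ℝ → ((G × ℝ) →L[ℝ] (G × ℝ)) := fun t =>
    (ContinuousLinearMap.inl ℝ G ℝ).comp
      ((L (β₀ t)).comp (ContinuousLinearMap.fst ℝ G ℝ)
        + (ContinuousLinearMap.snd ℝ G ℝ).smulRight (deriv β₀ t))
  have hMap : ∀ t x, M t x = (lie x.1 (β₀ t) + x.2 • deriv β₀ t, 0) := fun t x => rfl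
  have hM : ContDiff ℝ (⊤ : ℕ∞) M := by
    refine contDiff_const.clm_comp (ContDiff.add ?_ ?_)
    · exact (L.contDiff.comp hβ₀).clm_comp contDiff_const
    · exact contDiff_const.smulRight hdb
  obtain ⟨F, hF, hF0, hFd⟩ := linear_flow_aux M hM (fun t => ((α₀ t, 1) : G × ℝ))
    (hα₀.prodMk contDiff_const)
  have hF2 : ∀ ε t, (F (ε, t)).2 = 1 := by
    intro ε t
    have hd : ∀ e, HasDerivAt (fun e => (F (e, t)).2) 0 e := by
      intro e
      exact (hFd e t).snd
    have := is_const_of_deriv_eq_zero (fun e => (hd e).differentiableAt)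
      (fun e => (hd e).deriv) ε 0
    simpa [hF0] using this
  refine ⟨fun p => (F p).1, fun p => β₀ p.2, contDiff_fst.comp hF, hβ₀.comp contDiff_snd,
    fun t _ => ⟨by simp [hF0], rfl⟩, fun ε => ⟨hβ₀0, hβ₀1⟩, ?_⟩
  rintro ⟨ε, t⟩ -
  have h1 : partialE (fun p => (F p).1) (ε, t) = (M t (F (ε, t))).1 := by
    have hd : DifferentiableAt ℝ (fun p => (F p).1) (ε, t) :=
      (contDiff_fst.comp hF).differentiable (by simp) _
    have hc : HasDerivAt (fun e : ℝ => ((e, t) : ℝ × ℝ)) (1, 0) ε :=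
      (hasDerivAt_id ε).prodMk (hasDerivAt_const ε t)
    have h2 := HasFDerivAt.comp_hasDerivAt ε hd.hasFDerivAt hc
    exact h2.unique (hFd ε t).fst
  have h3 : partialT (fun p : ℝ × ℝ => β₀ p.2) (ε, t) = deriv β₀ t := by
    have hd : DifferentiableAt ℝ (fun p : ℝ × ℝ => β₀ p.2) (ε, t) :=
      (hβ₀.comp contDiff_snd).differentiable (by simp) _
    have hc : HasDerivAt (fun e : ℝ => ((ε, e) : ℝ × ℝ)) (0, 1) t :=
      (hasDerivAt_const t ε).prodMk (hasDerivAt_id t)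
    have h2 := HasFDerivAt.comp_hasDerivAt t hd.hasFDerivAt hc
    exact h2.deriv.symm
  rw [h1, h3, hMap, hF2, one_smul, add_comm]
end

section
/- First variation formula: for any smooth maps α, β : ℝ × [0,1] → 𝔤, the energy E(ε) = (1/2)∫₀¹ ⟨α(ε,t), α(ε,t)⟩ dt satisfies E'(ε) = ⟨β(ε,1), α(ε,1)⟩ - ⟨β(ε,0), α(ε,0)⟩ - ∫₀¹ ⟨β(ε,t), ∇_t α(ε,t)⟩ dt - ∫₀¹ ⟨Δ(α,β)(ε,t), α(ε,t)⟩ dt. -/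
open scoped InnerProductSpace

/-- **first variation formula.** For any smooth maps `α β : ℝ × [0,1] → 𝔤`,
the energy `E ε = ½ ∫₀¹ ⟪α(ε,t), α(ε,t)⟫ dt` satisfies
`E' ε = ⟪β(ε,1), α(ε,1)⟫ - ⟪β(ε,0), α(ε,0)⟫ - ∫₀¹ ⟪β(ε,t), ∇ₜα(ε,t)⟫ dt
        - ∫₀¹ ⟪Δ(α,β)(ε,t), α(ε,t)⟫ dt`,
where `∇ₜ α = ∂ₜ α + D_α α` and `Δ(α,β) = ∂ₜ β - ∂_ε α + [α,β]`. -/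
theorem first_variation_of_energy
    {G : Type*} [NormedAddCommGroup G] [InnerProductSpace ℝ G] [FiniteDimensional ℝ G]
    (lie : G →ₗ[ℝ] G →ₗ[ℝ] G)
    (hanti : ∀ u : G, lie u u = 0)
    (hjac : ∀ u v w : G, lie u (lie v w) = lie (lie u v) w + lie v (lie u w))
    (D : G →ₗ[ℝ] G →ₗ[ℝ] G)
    (hD : ∀ u v w : G,
      2 * ⟪D u v, w⟫_ℝ = ⟪lie u v, w⟫_ℝ + ⟪lie w u, v⟫_ℝ + ⟪lie w v, u⟫_ℝ)
    (α β : ℝ × ℝ → G) (hα : ContDiff ℝ (⊤ : ℕ∞) α) (hβ : ContDiff ℝ (⊤ : ℕ∞) β) :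
    ∀ ε : ℝ,
      HasDerivAt (fun e : ℝ => (1 / 2 : ℝ) * ∫ t in (0 : ℝ)..1, ⟪α (e, t), α (e, t)⟫_ℝ)
        (⟪β (ε, 1), α (ε, 1)⟫_ℝ - ⟪β (ε, 0), α (ε, 0)⟫_ℝ
          - (∫ t in (0 : ℝ)..1,
              ⟪β (ε, t), partialT α (ε, t) + D (α (ε, t)) (α (ε, t))⟫_ℝ)
          - ∫ t in (0 : ℝ)..1,
              ⟪partialT β (ε, t) - partialE α (ε, t) + lie (α (ε, t)) (β (ε, t)),
                α (ε, t)⟫_ℝ)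
        ε := by
  intro ε
  have hdα : ∀ p, HasFDerivAt α (fderiv ℝ α p) p := fun p =>
    (hα.differentiable (by simp) p).hasFDerivAt
  have hdβ : ∀ p, HasFDerivAt β (fderiv ℝ β p) p := fun p =>
    (hβ.differentiable (by simp) p).hasFDerivAt
  have cα : Continuous α := hα.continuous
  have cβ : Continuous β := hβ.continuous
  have cfα : Continuous (fderiv ℝ α) := hα.continuous_fderiv (by simp)
  have cfβ : Continuous (fderiv ℝ β) := hβ.continuous_fderiv (by simp)
  have cTα : Continuous (partialT α) := cfα.clm_apply continuous_const
  have cTβ : Continuous (partialT β) := cfβ.clm_apply continuous_const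
  have cEα : Continuous (partialE α) := cfα.clm_apply continuous_const
  have hE : ∀ e t, HasDerivAt (fun x : ℝ => α (x, t)) (partialE α (e, t)) e := fun e t =>
    (hdα (e, t)).comp_hasDerivAt e ((hasDerivAt_id e).prodMk (hasDerivAt_const e t))
  have hTα : ∀ e t, HasDerivAt (fun x : ℝ => α (e, x)) (partialT α (e, t)) t := fun e t =>
    (hdα (e, t)).comp_hasDerivAt t ((hasDerivAt_const t e).prodMk (hasDerivAt_id t))
  have hTβ : ∀ e t, HasDerivAt (fun x : ℝ => β (e, x)) (partialT β (e, t)) t := fun e t =>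
    (hdβ (e, t)).comp_hasDerivAt t ((hasDerivAt_const t e).prodMk (hasDerivAt_id t))
  have cF' : Continuous (fun p : ℝ × ℝ => ⟪α p, partialE α p⟫_ℝ + ⟪partialE α p, α p⟫_ℝ) :=
    (cα.inner cEα).add (cEα.inner cα)
  obtain ⟨C, hC⟩ := ((isCompact_Icc (a := ε - 1) (b := ε + 1)).prod
    (isCompact_Icc (a := (0 : ℝ)) (b := 1))).exists_bound_of_continuousOn cF'.continuousOn
  have key := (intervalIntegral.hasDerivAt_integral_of_dominated_loc_of_deriv_le
    (μ := MeasureTheory.volume) (a := 0) (b := 1)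
    (F := fun e t => ⟪α (e, t), α (e, t)⟫_ℝ)
    (F' := fun e t => ⟪α (e, t), partialE α (e, t)⟫_ℝ + ⟪partialE α (e, t), α (e, t)⟫_ℝ)
    (x₀ := ε) (s := Set.Icc (ε - 1) (ε + 1)) (bound := fun _ => C)
    (Icc_mem_nhds (by linarith) (by linarith))
    (Filter.Eventually.of_forall fun x =>
      (show Continuous (fun t : ℝ => ⟪α (x, t), α (x, t)⟫_ℝ) by fun_prop).aestronglyMeasurable)
    ((show Continuous (fun t : ℝ => ⟪α (ε, t), α (ε, t)⟫_ℝ) by fun_prop).intervalIntegrable _ _)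
    (cF'.comp (Continuous.prodMk_right ε)).aestronglyMeasurable
    (Filter.Eventually.of_forall fun t ht x hx => hC (x, t) ⟨hx, by
      rw [Set.uIoc_of_le zero_le_one] at ht
      exact ⟨ht.1.le, ht.2⟩⟩)
    intervalIntegrable_const
    (Filter.Eventually.of_forall fun t _ x _ => (hE x t).inner ℝ (hE x t))).2
  have key2 := key.const_mul (1 / 2 : ℝ)
  have ftc : ∫ t in (0 : ℝ)..1,
      (⟪β (ε, t), partialT α (ε, t)⟫_ℝ + ⟪partialT β (ε, t), α (ε, t)⟫_ℝ)
      = ⟪β (ε, 1), α (ε, 1)⟫_ℝ - ⟪β (ε, 0), α (ε, 0)⟫_ℝ :=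
    intervalIntegral.integral_eq_sub_of_hasDerivAt
      (f := fun t => ⟪β (ε, t), α (ε, t)⟫_ℝ)
      (fun t _ => (hTβ ε t).inner ℝ (hTα ε t))
      ((show Continuous (fun t : ℝ => ⟪β (ε, t), partialT α (ε, t)⟫_ℝ
        + ⟪partialT β (ε, t), α (ε, t)⟫_ℝ) by fun_prop).intervalIntegrable _ _)
  have hskew : ∀ u v : G, lie u v = - lie v u := by
    intro u v
    have h := hanti (u + v)
    simp only [map_add, LinearMap.add_apply, hanti, zero_add, add_zero] at h
    first
      | exact eq_neg_of_add_eq_zero_left h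
      | exact eq_neg_of_add_eq_zero_right h
  have hDa : ∀ a b : G, ⟪b, D a a⟫_ℝ = - ⟪lie a b, a⟫_ℝ := by
    intro a b
    have h := hD a a b
    rw [hanti, inner_zero_left] at h
    rw [hskew a b, inner_neg_left, real_inner_comm]
    linarith
  -- continuity of the bilinear terms
  have cbil : ∀ L : G →ₗ[ℝ] G →ₗ[ℝ] G, ∀ f g : ℝ → G, Continuous f → Continuous g →
      Continuous (fun t => L (f t) (g t)) := by
    intro L f g hf hg
    let L' : G →ₗ[ℝ] (G →L[ℝ] G) := (LinearMap.toContinuousLinearMap (𝕜 := ℝ)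
      (E := G) (F' := G)).toLinearMap ∘ₗ L
    exact (L'.continuous_of_finiteDimensional.comp hf).clm_apply hg
  have pα : Continuous (fun t : ℝ => α (ε, t)) := by fun_prop
  have pβ : Continuous (fun t : ℝ => β (ε, t)) := by fun_prop
  have cD := cbil D _ _ pα pα
  have cL := cbil lie _ _ pα pβ
  have q1 : Continuous (fun t : ℝ => partialT α (ε, t)) := by fun_prop
  have q2 : Continuous (fun t : ℝ => partialT β (ε, t)) := by fun_prop
  have q3 : Continuous (fun t : ℝ => partialE α (ε, t)) := by fun_prop
  have r1 := (pβ.inner (𝕜 := ℝ) q1).add (q2.inner (𝕜 := ℝ) pα)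
  have r2 := pβ.inner (𝕜 := ℝ) (q1.add cD)
  have r3 := ((q2.sub q3).add cL).inner (𝕜 := ℝ) pα
  refine HasDerivAt.congr_deriv key2 (Eq.symm ?_)
  rw [← ftc, ← intervalIntegral.integral_sub, ← intervalIntegral.integral_sub,
    ← intervalIntegral.integral_const_mul]
  · refine intervalIntegral.integral_congr fun t _ => ?_
    simp only [inner_add_right, inner_add_left, inner_sub_left, hDa]
    rw [real_inner_comm (partialE α (ε, t))]
    ring
  all_goals
    refine Continuous.intervalIntegrable ?_ _ _
    first
      | exact r1
      | exact r2
      | exact r3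
      | exact r1.sub r2
end

section
/- A smooth curve α₀ : [0,1] → 𝔤 is a geodesic, i.e. α₀'(t) = -D_{α₀(t)} α₀(t) for all t, if and only if it is an h-critical point of the energy: for every pair of smooth maps α, β : ℝ × [0,1] → 𝔤 with α(0,·) = α₀, β(ε,0) = β(ε,1) = 0 for all ε, and Δ(α,β) = 0, the energy E(ε) = (1/2)∫₀¹ ⟨α(ε,t), α(ε,t)⟩ dt satisfies E'(0) = 0. -/
open scoped InnerProductSpace

theorem aux_contDiff_bilin {G : Type*} [NormedAddCommGroup G] [NormedSpace ℝ G]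
    [FiniteDimensional ℝ G] {E : Type*} [NormedAddCommGroup E] [NormedSpace ℝ E]
    (B : G →ₗ[ℝ] G →ₗ[ℝ] G) (f g : E → G)
    (hf : ContDiff ℝ (⊤ : ℕ∞) f) (hg : ContDiff ℝ (⊤ : ℕ∞) g) :
    ContDiff ℝ (⊤ : ℕ∞) (fun x => B (f x) (g x)) := by
  let B' : G →L[ℝ] (G →L[ℝ] G) :=
    LinearMap.toContinuousLinearMap
      ((LinearMap.toContinuousLinearMap (𝕜 := ℝ) (E := G) (F' := G)).toLinearMap ∘ₗ B)
  have h : ContDiff ℝ (⊤ : ℕ∞) (fun x => B' (f x) (g x)) :=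
    (B'.contDiff.comp hf).clm_apply hg
  exact h

theorem aux_koszul {G : Type*} [NormedAddCommGroup G] [InnerProductSpace ℝ G]
    (lie : G →ₗ[ℝ] G →ₗ[ℝ] G) (hanti : ∀ u : G, lie u u = 0)
    (D : G →ₗ[ℝ] G →ₗ[ℝ] G)
    (hD : ∀ u v w : G,
      2 * ⟪D u v, w⟫_ℝ = ⟪lie u v, w⟫_ℝ + ⟪lie w u, v⟫_ℝ + ⟪lie w v, u⟫_ℝ)
    (u w : G) : ⟪u, lie u w⟫_ℝ = -⟪D u u, w⟫_ℝ := by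
  have h1 := hD u u w
  have h2 : lie w u = - lie u w := by
    have := hanti (u + w)
    simp only [map_add, LinearMap.add_apply, hanti, zero_add, add_zero] at this
    exact eq_neg_of_add_eq_zero_left (by rw [← this])
  rw [hanti, h2, inner_zero_left, inner_neg_left] at h1
  rw [real_inner_comm]
  linarith

theorem aux_partialE {G : Type*} [NormedAddCommGroup G] [NormedSpace ℝ G]
    (f : ℝ × ℝ → G) (hf : ContDiff ℝ (⊤ : ℕ∞) f) (e t : ℝ) :
    HasDerivAt (fun e => f (e, t)) (partialE f (e, t)) e := by
  have h := (hf.differentiable (by simp) (e, t)).hasFDerivAt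
  exact h.comp_hasDerivAt e ((hasDerivAt_id e).prodMk (hasDerivAt_const e t))

theorem aux_partialT {G : Type*} [NormedAddCommGroup G] [NormedSpace ℝ G]
    (f : ℝ × ℝ → G) (hf : ContDiff ℝ (⊤ : ℕ∞) f) (e t : ℝ) :
    HasDerivAt (fun t => f (e, t)) (partialT f (e, t)) t := by
  have h := (hf.differentiable (by simp) (e, t)).hasFDerivAt
  exact h.comp_hasDerivAt t ((hasDerivAt_const t e).prodMk (hasDerivAt_id t))

theorem aux_energy {G : Type*} [NormedAddCommGroup G] [InnerProductSpace ℝ G]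
    (α : ℝ × ℝ → G) (hα : ContDiff ℝ (⊤ : ℕ∞) α) :
    HasDerivAt (fun e : ℝ => (1 / 2 : ℝ) * ∫ t in (0 : ℝ)..1, ⟪α (e, t), α (e, t)⟫_ℝ)
      (∫ t in (0 : ℝ)..1, ⟪α (0, t), partialE α (0, t)⟫_ℝ) 0 := by
  have hc : Continuous α := hα.continuous
  have hp : Continuous (partialE α) := by
    have := hα.continuous_fderiv (by simp)
    unfold partialE
    fun_prop
  let F' : ℝ → ℝ → ℝ := fun e t => 2 * ⟪α (e, t), partialE α (e, t)⟫_ℝ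
  have hF'c : Continuous (fun p : ℝ × ℝ => F' p.1 p.2) := by
    simp only [F']; fun_prop
  obtain ⟨C, hC⟩ := ((isCompact_Icc (a := (-1 : ℝ)) (b := 1)).prod
    (isCompact_Icc (a := (0 : ℝ)) (b := 1))).exists_bound_of_continuousOn hF'c.continuousOn
  have key := intervalIntegral.hasDerivAt_integral_of_dominated_loc_of_deriv_le
    (μ := MeasureTheory.volume) (a := 0) (b := 1) (x₀ := (0 : ℝ)) (s := Set.Icc (-1 : ℝ) 1)
    (F := fun e t => ⟪α (e, t), α (e, t)⟫_ℝ) (F' := F') (bound := fun _ => C)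
    (Icc_mem_nhds (by norm_num) (by norm_num))
    (Filter.Eventually.of_forall fun e => by
      have : Continuous (fun t => ⟪α (e, t), α (e, t)⟫_ℝ) := by fun_prop
      exact this.aestronglyMeasurable)
    (by
      have : Continuous (fun t => ⟪α ((0 : ℝ), t), α ((0 : ℝ), t)⟫_ℝ) := by fun_prop
      exact this.intervalIntegrable _ _)
    (by
      have : Continuous (F' 0) := by simp only [F']; fun_prop
      exact this.aestronglyMeasurable)
    (Filter.Eventually.of_forall fun t ht e he => by
      rw [Set.uIoc_of_le zero_le_one] at ht
      exact hC (e, t) ⟨he, ht.1.le, ht.2⟩)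
    (by simp)
    (Filter.Eventually.of_forall fun t _ e _ => by
      have h := aux_partialE α hα e t
      have h2 := h.inner ℝ h
      have h3 : F' e t = ⟪α (e, t), partialE α (e, t)⟫_ℝ + ⟪partialE α (e, t), α (e, t)⟫_ℝ := by
        simp only [F']
        rw [real_inner_comm (α (e, t)) (partialE α (e, t))]
        ring
      rw [h3]
      exact h2)
  have h := key.2.const_mul (1 / 2 : ℝ)
  have heq : (1 / 2 : ℝ) * ∫ t in (0 : ℝ)..1, F' 0 t
      = ∫ t in (0 : ℝ)..1, ⟪α (0, t), partialE α (0, t)⟫_ℝ := by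
    simp only [F']
    rw [intervalIntegral.integral_const_mul]
    ring
  rw [heq] at h
  exact h

theorem aux_first_variation
    {G : Type*} [NormedAddCommGroup G] [InnerProductSpace ℝ G] [FiniteDimensional ℝ G]
    (lie : G →ₗ[ℝ] G →ₗ[ℝ] G)
    (hanti : ∀ u : G, lie u u = 0)
    (D : G →ₗ[ℝ] G →ₗ[ℝ] G)
    (hD : ∀ u v w : G,
      2 * ⟪D u v, w⟫_ℝ = ⟪lie u v, w⟫_ℝ + ⟪lie w u, v⟫_ℝ + ⟪lie w v, u⟫_ℝ)
    (α₀ : ℝ → G) (hα₀ : ContDiff ℝ (⊤ : ℕ∞) α₀)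
    (α β : ℝ × ℝ → G) (hα : ContDiff ℝ (⊤ : ℕ∞) α) (hβ : ContDiff ℝ (⊤ : ℕ∞) β)
    (h0 : ∀ t : ℝ, α (0, t) = α₀ t)
    (hb : ∀ ε : ℝ, β (ε, 0) = 0 ∧ β (ε, 1) = 0)
    (hΔ : ∀ p : ℝ × ℝ, p.2 ∈ Set.Icc (0 : ℝ) 1 →
          partialT β p - partialE α p + lie (α p) (β p) = 0) :
    HasDerivAt (fun e : ℝ => (1 / 2 : ℝ) * ∫ t in (0 : ℝ)..1, ⟪α (e, t), α (e, t)⟫_ℝ)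
      (-∫ t in (0 : ℝ)..1, ⟪deriv α₀ t + D (α₀ t) (α₀ t), β (0, t)⟫_ℝ) 0 := by
  have hβc : Continuous β := hβ.continuous
  have hα₀c : Continuous α₀ := hα₀.continuous
  have hTc : Continuous (partialT β) := by
    have := hβ.continuous_fderiv (by simp)
    unfold partialT
    fun_prop
  have hdc : Continuous (deriv α₀) := hα₀.continuous_deriv (by simp)
  have hDc : Continuous (fun t => D (α₀ t) (α₀ t)) :=
    (aux_contDiff_bilin D α₀ α₀ hα₀ hα₀).continuous
  have hparts : ∫ t in (0 : ℝ)..1,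
      (⟪α₀ t, partialT β (0, t)⟫_ℝ + ⟪deriv α₀ t, β (0, t)⟫_ℝ) = 0 := by
    rw [intervalIntegral.integral_eq_sub_of_hasDerivAt (f := fun t => ⟪α₀ t, β (0, t)⟫_ℝ)]
    · simp [hb]
    · intro t _
      exact (hα₀.differentiable (by simp) t).hasDerivAt.inner ℝ (aux_partialT β hβ 0 t)
    · apply Continuous.intervalIntegrable
      fun_prop
  have heq : ∫ t in (0 : ℝ)..1, ⟪α (0, t), partialE α (0, t)⟫_ℝ
      = -∫ t in (0 : ℝ)..1, ⟪deriv α₀ t + D (α₀ t) (α₀ t), β (0, t)⟫_ℝ := by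
    refine Eq.trans ?_ ((congrArg (fun x : ℝ => x - ∫ t in (0 : ℝ)..1,
      ⟪deriv α₀ t + D (α₀ t) (α₀ t), β (0, t)⟫_ℝ) hparts).trans (zero_sub _))
    rw [← intervalIntegral.integral_sub]
    · apply intervalIntegral.integral_congr
      intro t ht
      rw [Set.uIcc_of_le zero_le_one] at ht
      have h1 := hΔ (0, t) ht
      have h2 : partialE α (0, t) = partialT β (0, t) + lie (α₀ t) (β (0, t)) := by
        rw [← h0]
        have : partialT β (0, t) + lie (α (0, t)) (β (0, t)) - partialE α (0, t) = 0 := by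
          rw [← h1]; abel
        exact (sub_eq_zero.mp this).symm
      simp only
      rw [h0, h2, inner_add_right, aux_koszul lie hanti D hD, inner_add_left]
      ring
    · apply Continuous.intervalIntegrable
      fun_prop
    · apply Continuous.intervalIntegrable
      exact (hdc.add hDc).inner (hβc.comp (by fun_prop : Continuous fun t : ℝ => ((0 : ℝ), t)))
  rw [← heq]
  exact aux_energy α hα

theorem aux_flow {G : Type*} [NormedAddCommGroup G] [NormedSpace ℝ G]
    [FiniteDimensional ℝ G] (M : G →ₗ[ℝ] G) :
    ∃ γ : ℝ → (G →L[ℝ] G), ContDiff ℝ (⊤ : ℕ∞) γ ∧ γ 0 = ContinuousLinearMap.id ℝ G ∧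
      ∀ s x, HasDerivAt (fun s => γ s x) (M (γ s x)) s := by
  have : CompleteSpace G := FiniteDimensional.complete ℝ G
  obtain ⟨L, hL⟩ : ∃ L : G →L[ℝ] G, ∀ u, L u = M u :=
    ⟨LinearMap.toContinuousLinearMap M, fun _ => rfl⟩
  refine ⟨fun s => NormedSpace.exp (s • L), ?_, ?_, ?_⟩
  · have h1 : ContDiff ℝ (⊤ : ℕ∞) (NormedSpace.exp : (G →L[ℝ] G) → (G →L[ℝ] G)) := by
      rw [contDiff_iff_contDiffAt]
      intro x
      exact (NormedSpace.exp_analytic (𝕂 := ℝ) x).contDiffAt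
    exact h1.comp (contDiff_id.smul contDiff_const)
  · simp only [zero_smul, NormedSpace.exp_zero]
    rfl
  · intro s x
    have h := hasDerivAt_exp_smul_const' (𝕂 := ℝ) L s
    have h2 := (ContinuousLinearMap.apply ℝ G x).hasFDerivAt.comp_hasDerivAt s h
    rw [← hL]
    exact h2

theorem aux_exists_variation
    {G : Type*} [NormedAddCommGroup G] [InnerProductSpace ℝ G] [FiniteDimensional ℝ G]
    (lie : G →ₗ[ℝ] G →ₗ[ℝ] G)
    (hanti : ∀ u : G, lie u u = 0)
    (α₀ : ℝ → G) (hα₀ : ContDiff ℝ (⊤ : ℕ∞) α₀)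
    (b : ℝ → ℝ) (hb : ContDiff ℝ (⊤ : ℕ∞) b) (w : G) :
    ∃ α : ℝ × ℝ → G, ContDiff ℝ (⊤ : ℕ∞) α ∧ (∀ t : ℝ, α (0, t) = α₀ t) ∧
      ∀ p : ℝ × ℝ, partialT (fun p : ℝ × ℝ => b p.2 • w) p - partialE α p
        + lie (α p) (b p.2 • w) = 0 := by
  obtain ⟨γ, hγ, hγ0, hγd⟩ := aux_flow (lie.flip w)
  have hb' : ContDiff ℝ (⊤ : ℕ∞) (deriv b) := by
    have h : ContDiff ℝ ((⊤ : ℕ∞) + 1 : WithTop ℕ∞) b := by simpa using hb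
    exact (contDiff_succ_iff_deriv.mp h).2.2
  have hα : ContDiff ℝ (⊤ : ℕ∞)
      (fun p : ℝ × ℝ => γ (p.1 * b p.2) (α₀ p.2) + (p.1 * deriv b p.2) • w) := by
    have e1 : ContDiff ℝ (⊤ : ℕ∞) (fun p : ℝ × ℝ => γ (p.1 * b p.2)) :=
      hγ.comp (contDiff_fst.mul (hb.comp contDiff_snd))
    exact (e1.clm_apply (hα₀.comp contDiff_snd)).add
      ((contDiff_fst.mul (hb'.comp contDiff_snd)).smul contDiff_const)
  have hβ : ContDiff ℝ (⊤ : ℕ∞) (fun p : ℝ × ℝ => b p.2 • w) :=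
    (hb.comp contDiff_snd).smul contDiff_const
  refine ⟨_, hα, fun t => by simp [hγ0], ?_⟩
  rintro ⟨e, t⟩
  have hT : partialT (fun p : ℝ × ℝ => b p.2 • w) (e, t) = deriv b t • w :=
    (aux_partialT _ hβ e t).unique
      ((hb.differentiable (by simp) t).hasDerivAt.smul_const w)
  have hs : HasDerivAt (fun e : ℝ => e * b t) (b t) e := by
    simpa using (hasDerivAt_id e).mul_const (b t)
  have hs' : HasDerivAt (fun e : ℝ => e * deriv b t) (deriv b t) e := by
    simpa using (hasDerivAt_id e).mul_const (deriv b t)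
  have hg : HasDerivAt (fun e : ℝ => γ (e * b t) (α₀ t))
      (b t • lie (γ (e * b t) (α₀ t)) w) e :=
    HasDerivAt.scomp (g₁ := fun s => γ s (α₀ t)) (h := fun e : ℝ => e * b t) e
      (hγd (e * b t) (α₀ t)) hs
  have hE := (aux_partialE _ hα e t).unique (hg.add (hs'.smul_const w))
  rw [hT, hE]
  simp [hanti]

/-- A smooth curve `α₀ : [0,1] → 𝔤` is a geodesic
(`α₀' t = -D (α₀ t) (α₀ t)`) if and only if it is an `h`-critical point of the energy:
for every pair of smooth maps `α β : ℝ × [0,1] → 𝔤` with `α(0,·) = α₀`,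
`β(ε,0) = β(ε,1) = 0` for all `ε` and `Δ(α,β) = 0`, the energy
`E ε = ½ ∫₀¹ ⟪α(ε,t), α(ε,t)⟫ dt` satisfies `E'(0) = 0`. -/
theorem geodesic_iff_critical_point_of_energy
    {G : Type*} [NormedAddCommGroup G] [InnerProductSpace ℝ G] [FiniteDimensional ℝ G]
    (lie : G →ₗ[ℝ] G →ₗ[ℝ] G)
    (hanti : ∀ u : G, lie u u = 0)
    (hjac : ∀ u v w : G, lie u (lie v w) = lie (lie u v) w + lie v (lie u w))
    (D : G →ₗ[ℝ] G →ₗ[ℝ] G)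
    (hD : ∀ u v w : G,
      2 * ⟪D u v, w⟫_ℝ = ⟪lie u v, w⟫_ℝ + ⟪lie w u, v⟫_ℝ + ⟪lie w v, u⟫_ℝ)
    (α₀ : ℝ → G) (hα₀ : ContDiff ℝ (⊤ : ℕ∞) α₀) :
    (∀ t ∈ Set.Icc (0 : ℝ) 1, deriv α₀ t = -(D (α₀ t) (α₀ t))) ↔
      (∀ α β : ℝ × ℝ → G, ContDiff ℝ (⊤ : ℕ∞) α → ContDiff ℝ (⊤ : ℕ∞) β →
        (∀ t : ℝ, α (0, t) = α₀ t) →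
        (∀ ε : ℝ, β (ε, 0) = 0 ∧ β (ε, 1) = 0) →
        (∀ p : ℝ × ℝ, p.2 ∈ Set.Icc (0 : ℝ) 1 →
          partialT β p - partialE α p + lie (α p) (β p) = 0) →
        HasDerivAt (fun e : ℝ => (1 / 2 : ℝ) * ∫ t in (0 : ℝ)..1, ⟪α (e, t), α (e, t)⟫_ℝ)
          0 0) := by
  constructor
  · intro hgeo α β hα hβ h0 hb hΔ
    have h := aux_first_variation lie hanti D hD α₀ hα₀ α β hα hβ h0 hb hΔ
    have hz : ∫ t in (0 : ℝ)..1, ⟪deriv α₀ t + D (α₀ t) (α₀ t), β (0, t)⟫_ℝ = 0 := by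
      rw [intervalIntegral.integral_congr (g := fun _ => (0 : ℝ))]
      · simp
      · intro t ht
        rw [Set.uIcc_of_le zero_le_one] at ht
        simp [hgeo t ht]
    rw [hz, neg_zero] at h
    exact h
  · intro hcrit
    have hd : ContDiff ℝ (⊤ : ℕ∞) (deriv α₀) := by
      have h : ContDiff ℝ ((⊤ : ℕ∞) + 1 : WithTop ℕ∞) α₀ := by simpa using hα₀
      exact (contDiff_succ_iff_deriv.mp h).2.2
    have hFs : ContDiff ℝ (⊤ : ℕ∞) (fun t => deriv α₀ t + D (α₀ t) (α₀ t)) :=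
      hd.add (aux_contDiff_bilin D α₀ α₀ hα₀ hα₀)
    have main : ∀ w : G, ∀ t ∈ Set.Ioo (0 : ℝ) 1,
        ⟪deriv α₀ t + D (α₀ t) (α₀ t), w⟫_ℝ = 0 := by
      intro w
      set f : ℝ → ℝ := fun t => ⟪deriv α₀ t + D (α₀ t) (α₀ t), w⟫_ℝ with hf
      have hfs : ContDiff ℝ (⊤ : ℕ∞) f := hFs.inner ℝ contDiff_const
      let b : ℝ → ℝ := fun t => t * (1 - t) * f t
      have hb : ContDiff ℝ (⊤ : ℕ∞) b :=
        (contDiff_id.mul (contDiff_const.sub contDiff_id)).mul hfs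
      obtain ⟨α, hα, h0, hΔ⟩ := aux_exists_variation lie hanti α₀ hα₀ b hb w
      have hβ : ContDiff ℝ (⊤ : ℕ∞) (fun p : ℝ × ℝ => b p.2 • w) :=
        (hb.comp contDiff_snd).smul contDiff_const
      have hbd : ∀ ε : ℝ, (fun p : ℝ × ℝ => b p.2 • w) (ε, 0) = 0 ∧
          (fun p : ℝ × ℝ => b p.2 • w) (ε, 1) = 0 := by
        intro ε
        simp [b]
      have h1 := hcrit α _ hα hβ h0 hbd (fun p _ => hΔ p)
      have h2 := aux_first_variation lie hanti D hD α₀ hα₀ α _ hα hβ h0 hbd (fun p _ => hΔ p)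
      have h3 := neg_eq_zero.mp (h2.unique h1)
      have h4 : ∫ t in (0 : ℝ)..1, t * (1 - t) * f t ^ 2 = 0 := by
        refine Eq.trans ?_ h3
        apply intervalIntegral.integral_congr
        intro t _
        simp only [inner_smul_right, b, hf]
        ring
      intro t ht
      by_contra hne
      have hfc : Continuous f := hfs.continuous
      have h5 := intervalIntegral.integral_lt_integral_of_continuousOn_of_le_of_exists_lt
        (f := fun _ => (0 : ℝ)) (g := fun t => t * (1 - t) * f t ^ 2) (a := 0) (b := 1)
        zero_lt_one continuousOn_const (by fun_prop)
        (fun x hx => mul_nonneg (mul_nonneg hx.1.le (by linarith [hx.2])) (sq_nonneg _))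
        ⟨t, ⟨ht.1.le, ht.2.le⟩, mul_pos (mul_pos ht.1 (by linarith [ht.2]))
          (lt_of_le_of_ne (sq_nonneg _) (Ne.symm (pow_ne_zero 2 hne)))⟩
      rw [h4] at h5
      simp at h5
    have hz : Set.EqOn (fun t => deriv α₀ t + D (α₀ t) (α₀ t)) (fun _ => 0)
        (Set.Ioo (0 : ℝ) 1) := by
      intro t ht
      exact inner_self_eq_zero (𝕜 := ℝ).mp (main _ t ht)
    have hz' := hz.closure hFs.continuous continuous_const
    rw [closure_Ioo zero_ne_one] at hz'
    intro t ht
    exact eq_neg_of_add_eq_zero_left (hz' ht)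
end

section
/- Second variation formula: let α, β : ℝ × [0,1] → 𝔤 be smooth maps with Δ(α,β) = 0, β(ε,0) = β(ε,1) = 0 for all ε, and such that α₀ = α(0,·) is a geodesic. Then, writing β₀ = β(0,·), the energy E(ε) = (1/2)∫₀¹ ⟨α(ε,t), α(ε,t)⟩ dt satisfies E''(0) = ∫₀¹ ⟨∇_t β₀, ∇_t β₀⟩ dt + ∫₀¹ ⟨β₀, R(α₀,β₀)α₀⟩ dt. -/
open scoped InnerProductSpace

section Helpers

variable {G : Type*} [NormedAddCommGroup G]

lemma aux_hasDerivAt_E [NormedSpace ℝ G] {f : ℝ × ℝ → G} (hf : ContDiff ℝ (⊤ : ℕ∞) f) (e t : ℝ) :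
    HasDerivAt (fun e => f (e, t)) (partialE f (e, t)) e := by
  have h1 : HasFDerivAt f (fderiv ℝ f (e, t)) (e, t) :=
    (hf.differentiable (by simp) (e, t)).hasFDerivAt
  have h2 : HasDerivAt (fun e : ℝ => (e, t)) ((1 : ℝ), (0 : ℝ)) e :=
    (hasDerivAt_id e).prodMk (hasDerivAt_const e t)
  exact h1.comp_hasDerivAt e h2

lemma aux_hasDerivAt_T [NormedSpace ℝ G] {f : ℝ × ℝ → G} (hf : ContDiff ℝ (⊤ : ℕ∞) f) (e t : ℝ) :
    HasDerivAt (fun t => f (e, t)) (partialT f (e, t)) t := by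
  have h1 : HasFDerivAt f (fderiv ℝ f (e, t)) (e, t) :=
    (hf.differentiable (by simp) (e, t)).hasFDerivAt
  have h2 : HasDerivAt (fun t : ℝ => (e, t)) ((0 : ℝ), (1 : ℝ)) t :=
    (hasDerivAt_const t e).prodMk (hasDerivAt_id t)
  exact h1.comp_hasDerivAt t h2

lemma aux_contDiff_E [NormedSpace ℝ G] {f : ℝ × ℝ → G} (hf : ContDiff ℝ (⊤ : ℕ∞) f) :
    ContDiff ℝ (⊤ : ℕ∞) (partialE f) := by
  unfold partialE
  exact (hf.fderiv_right (m := (⊤ : ℕ∞)) (by simp)).clm_apply contDiff_const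

lemma aux_contDiff_T [NormedSpace ℝ G] {f : ℝ × ℝ → G} (hf : ContDiff ℝ (⊤ : ℕ∞) f) :
    ContDiff ℝ (⊤ : ℕ∞) (partialT f) := by
  unfold partialT
  exact (hf.fderiv_right (m := (⊤ : ℕ∞)) (by simp)).clm_apply contDiff_const

lemma aux_symm [NormedSpace ℝ G] {f : ℝ × ℝ → G} (hf : ContDiff ℝ (⊤ : ℕ∞) f) (p : ℝ × ℝ) :
    partialE (partialT f) p = partialT (partialE f) p := by
  have hd : DifferentiableAt ℝ (fderiv ℝ f) p :=
    (hf.fderiv_right (m := (⊤ : ℕ∞)) (by simp)).differentiable (by simp) p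
  have hs : IsSymmSndFDerivAt ℝ f p :=
    hf.contDiffAt.isSymmSndFDerivAt (by
      simp only [minSmoothness_of_isRCLikeNormedField]
      exact WithTop.coe_le_coe.2 (le_top : (2 : ℕ∞) ≤ ⊤))
  have key : ∀ v w : ℝ × ℝ, fderiv ℝ (fun q => fderiv ℝ f q v) p w
      = fderiv ℝ (fderiv ℝ f) p w v := by
    intro v w
    rw [fderiv_clm_apply hd (differentiableAt_const v)]
    simp
  unfold partialE partialT
  rw [key, key, hs.eq]

lemma aux_deriv_integral {f : ℝ × ℝ → ℝ} (hf : ContDiff ℝ (⊤ : ℕ∞) f) (e : ℝ) :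
    HasDerivAt (fun e => ∫ t in (0 : ℝ)..1, f (e, t)) (∫ t in (0 : ℝ)..1, partialE f (e, t)) e := by
  have hc : Continuous (partialE f) := (aux_contDiff_E hf).continuous
  have hK : IsCompact (Set.Icc (e - 1) (e + 1) ×ˢ Set.Icc (0 : ℝ) 1) :=
    isCompact_Icc.prod isCompact_Icc
  obtain ⟨C, hC⟩ := hK.exists_bound_of_continuousOn hc.continuousOn
  have hfc : ∀ x : ℝ, Continuous (fun t => f (x, t)) := fun x =>
    hf.continuous.comp (by fun_prop)
  have hfc' : ∀ x : ℝ, Continuous (fun t => partialE f (x, t)) := fun x =>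
    hc.comp (by fun_prop)
  refine (intervalIntegral.hasDerivAt_integral_of_dominated_loc_of_deriv_le
    (F := fun e t => f (e, t)) (F' := fun e t => partialE f (e, t)) (bound := fun _ => C)
    (s := Set.Icc (e - 1) (e + 1)) (Icc_mem_nhds (by linarith) (by linarith))
    (Filter.Eventually.of_forall fun x => (hfc x).aestronglyMeasurable)
    ((hfc e).intervalIntegrable _ _) (hfc' e).aestronglyMeasurable
    (Filter.Eventually.of_forall ?_) intervalIntegrable_const
    (Filter.Eventually.of_forall fun t _ x _ => aux_hasDerivAt_E hf x t)).2
  intro t ht x hx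
  rw [Set.uIoc_of_le zero_le_one] at ht
  exact hC (x, t) ⟨hx, ht.1.le, ht.2⟩

lemma aux_bilin [NormedSpace ℝ G] [FiniteDimensional ℝ G] (B : G →ₗ[ℝ] G →ₗ[ℝ] G)
    {f g : ℝ → G} {f' g' : G} {x : ℝ} (hf : HasDerivAt f f' x) (hg : HasDerivAt g g' x) :
    HasDerivAt (fun y => B (f y) (g y)) (B f' (g x) + B (f x) g') x := by
  let B' : G →L[ℝ] G →L[ℝ] G :=
    LinearMap.toContinuousLinearMap
      ((LinearMap.toContinuousLinearMap : (G →ₗ[ℝ] G) ≃ₗ[ℝ] (G →L[ℝ] G)).toLinearMap ∘ₗ B)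
  have h := (B'.hasFDerivAt.comp_hasDerivAt x hf).clm_apply hg
  exact h

lemma aux_bilin_cont [NormedSpace ℝ G] [FiniteDimensional ℝ G] (B : G →ₗ[ℝ] G →ₗ[ℝ] G)
    {f g : ℝ → G} (hf : Continuous f) (hg : Continuous g) :
    Continuous (fun y => B (f y) (g y)) := by
  let B' : G →L[ℝ] G →L[ℝ] G :=
    LinearMap.toContinuousLinearMap
      ((LinearMap.toContinuousLinearMap : (G →ₗ[ℝ] G) ≃ₗ[ℝ] (G →L[ℝ] G)).toLinearMap ∘ₗ B)
  have h := (B'.continuous.comp hf).clm_apply hg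
  exact h

lemma aux_algebra [InnerProductSpace ℝ G] (lie D : G →ₗ[ℝ] G →ₗ[ℝ] G)
    (hanti : ∀ u : G, lie u u = 0)
    (hD : ∀ u v w : G,
      2 * ⟪D u v, w⟫_ℝ = ⟪lie u v, w⟫_ℝ + ⟪lie w u, v⟫_ℝ + ⟪lie w v, u⟫_ℝ)
    (a b bt g gt : G) :
    ⟪gt + (lie (bt + lie a b) b + lie a g), a⟫_ℝ + ⟪bt + lie a b, bt + lie a b⟫_ℝ =
      (⟪g + D b b, -(D a a)⟫_ℝ + ⟪gt + (D bt b + D b bt), a⟫_ℝ)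
      + (⟪bt + D a b, bt + D a b⟫_ℝ
      + ⟪b, D a (D b a) - D b (D a a) - D (lie a b) a⟫_ℝ) := by
  have hsk : ∀ u v : G, lie u v = - lie v u := by
    intro u v
    have h := hanti (u + v)
    simp only [map_add, LinearMap.add_apply, hanti, zero_add, add_zero] at h
    exact eq_neg_of_add_eq_zero_right h
  have htor : ∀ u v : G, lie u v = D u v - D v u := by
    intro u v
    refine ext_inner_right ℝ fun w => ?_
    have h1 := hD u v w
    have h2 := hD v u w
    rw [hsk v u, inner_neg_left] at h2
    rw [inner_sub_left]
    linarith
  have hmet : ∀ u v w : G, ⟪D u v, w⟫_ℝ = - ⟪D u w, v⟫_ℝ := by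
    intro u v w
    have h1 := hD u v w
    have h2 := hD u w v
    rw [hsk w u, hsk w v] at h1
    rw [hsk v u] at h2
    simp only [inner_neg_left] at h1 h2
    linarith
  have hz : ∀ u v : G, ⟪D u v, v⟫_ℝ = 0 := by
    intro u v
    have := hmet u v v
    linarith
  simp only [htor, map_add, map_sub, LinearMap.add_apply, LinearMap.sub_apply, inner_add_left,
    inner_add_right, inner_sub_left, inner_sub_right, inner_neg_right]
  have e : ∀ u v : G, ⟪u, v⟫_ℝ = ⟪v, u⟫_ℝ := fun u v => real_inner_comm v u
  linarith [hmet a g a, hz g a, hmet b bt a, hmet b (D a b) a, hmet b (D b a) a,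
    hmet b b (D a a), hmet (D a b) b a, hmet (D b a) b a, hmet a (D b a) b,
    e (D b a) (D a b), e bt (D b a), e bt (D a b), e g (D a a), e b (D a (D b a)),
    e b (D b (D a a)), e b (D (D a b) a), e b (D (D b a) a), e (D a a) (D b b)]

end Helpers

/-- **second variation formula.** Let `α β : ℝ × [0,1] → 𝔤` be smooth maps
with `Δ(α,β) = 0`, `β(ε,0) = β(ε,1) = 0` for all `ε`, and such that `α₀ = α(0,·)` is a
geodesic.  Then, with `β₀ = β(0,·)`, the energy `E ε = ½ ∫₀¹ ⟪α(ε,t), α(ε,t)⟫ dt` satisfies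
`E''(0) = ∫₀¹ ⟪∇ₜβ₀, ∇ₜβ₀⟫ dt + ∫₀¹ ⟪β₀, R(α₀,β₀)α₀⟫ dt`, where `∇ₜβ = ∂ₜβ + D_α β`,
`Δ(α,β) = ∂ₜβ - ∂_ε α + [α,β]`, and `R(u,v)w = D_u(D_v w) - D_v(D_u w) - D_{[u,v]}w`. -/
theorem second_variation_of_energy
    {G : Type*} [NormedAddCommGroup G] [InnerProductSpace ℝ G] [FiniteDimensional ℝ G]
    (lie : G →ₗ[ℝ] G →ₗ[ℝ] G)
    (hanti : ∀ u : G, lie u u = 0)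
    (hjac : ∀ u v w : G, lie u (lie v w) = lie (lie u v) w + lie v (lie u w))
    (D : G →ₗ[ℝ] G →ₗ[ℝ] G)
    (hD : ∀ u v w : G,
      2 * ⟪D u v, w⟫_ℝ = ⟪lie u v, w⟫_ℝ + ⟪lie w u, v⟫_ℝ + ⟪lie w v, u⟫_ℝ)
    (α β : ℝ × ℝ → G) (hα : ContDiff ℝ (⊤ : ℕ∞) α) (hβ : ContDiff ℝ (⊤ : ℕ∞) β)
    (hΔ : ∀ p : ℝ × ℝ, p.2 ∈ Set.Icc (0 : ℝ) 1 →
      partialT β p - partialE α p + lie (α p) (β p) = 0)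
    (hends : ∀ ε : ℝ, β (ε, 0) = 0 ∧ β (ε, 1) = 0)
    (hgeo : ∀ t ∈ Set.Icc (0 : ℝ) 1,
      partialT α (0, t) = -(D (α (0, t)) (α (0, t)))) :
    deriv (deriv (fun e : ℝ =>
        (1 / 2 : ℝ) * ∫ t in (0 : ℝ)..1, ⟪α (e, t), α (e, t)⟫_ℝ)) 0 =
      (∫ t in (0 : ℝ)..1,
        ⟪partialT β (0, t) + D (α (0, t)) (β (0, t)),
          partialT β (0, t) + D (α (0, t)) (β (0, t))⟫_ℝ)
      + ∫ t in (0 : ℝ)..1,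
          ⟪β (0, t),
            D (α (0, t)) (D (β (0, t)) (α (0, t)))
              - D (β (0, t)) (D (α (0, t)) (α (0, t)))
              - D (lie (α (0, t)) (β (0, t))) (α (0, t))⟫_ℝ := by
  have hEα := aux_contDiff_E hα
  have hEβ := aux_contDiff_E hβ
  have hTβ := aux_contDiff_T hβ
  have hf : ContDiff ℝ (⊤ : ℕ∞) (fun p : ℝ × ℝ => ⟪α p, α p⟫_ℝ) := hα.inner ℝ hα
  have hf1 : ContDiff ℝ (⊤ : ℕ∞) (fun p : ℝ × ℝ => ⟪partialE α p, α p⟫_ℝ) := hEα.inner ℝ hα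
  have hE1 : ∀ p : ℝ × ℝ, partialE (fun p : ℝ × ℝ => ⟪α p, α p⟫_ℝ) p
      = 2 * ⟪partialE α p, α p⟫_ℝ := by
    rintro ⟨e, t⟩
    have h1 := aux_hasDerivAt_E hf e t
    have h2 := (aux_hasDerivAt_E hα e t).inner ℝ (aux_hasDerivAt_E hα e t)
    rw [h1.unique h2, real_inner_comm]
    ring
  have hE2 : ∀ p : ℝ × ℝ, partialE (fun p : ℝ × ℝ => ⟪partialE α p, α p⟫_ℝ) p
      = ⟪partialE (partialE α) p, α p⟫_ℝ + ⟪partialE α p, partialE α p⟫_ℝ := by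
    rintro ⟨e, t⟩
    have h1 := aux_hasDerivAt_E hf1 e t
    have h2 := (aux_hasDerivAt_E hEα e t).inner ℝ (aux_hasDerivAt_E hα e t)
    rw [h1.unique h2]
    ring
  have hd1 : deriv (fun e : ℝ => (1 / 2 : ℝ) * ∫ t in (0 : ℝ)..1, ⟪α (e, t), α (e, t)⟫_ℝ)
      = fun e => ∫ t in (0 : ℝ)..1, ⟪partialE α (e, t), α (e, t)⟫_ℝ := by
    funext e
    rw [((aux_deriv_integral hf e).const_mul (1 / 2 : ℝ)).deriv]
    simp only [hE1]
    rw [intervalIntegral.integral_const_mul]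
    ring
  rw [hd1, (aux_deriv_integral hf1 0).deriv]
  simp only [hE2]
  have hsl : Continuous (fun t : ℝ => ((0 : ℝ), t)) := by fun_prop
  have cα : Continuous (fun t : ℝ => α (0, t)) := hα.continuous.comp hsl
  have cβ : Continuous (fun t : ℝ => β (0, t)) := hβ.continuous.comp hsl
  have cTβ : Continuous (fun t : ℝ => partialT β (0, t)) := hTβ.continuous.comp hsl
  have cEβ : Continuous (fun t : ℝ => partialE β (0, t)) := hEβ.continuous.comp hsl
  have cTα : Continuous (fun t : ℝ => partialT α (0, t)) :=
    (aux_contDiff_T hα).continuous.comp hsl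
  have cTEβ : Continuous (fun t : ℝ => partialT (partialE β) (0, t)) :=
    (aux_contDiff_T hEβ).continuous.comp hsl
  -- the boundary term
  have hder : ∀ t : ℝ, HasDerivAt
      (fun t => ⟪partialE β (0, t) + D (β (0, t)) (β (0, t)), α (0, t)⟫_ℝ)
      (⟪partialE β (0, t) + D (β (0, t)) (β (0, t)), partialT α (0, t)⟫_ℝ
        + ⟪partialT (partialE β) (0, t)
          + (D (partialT β (0, t)) (β (0, t)) + D (β (0, t)) (partialT β (0, t))), α (0, t)⟫_ℝ)
      t := by
    intro t
    exact ((aux_hasDerivAt_T hEβ 0 t).add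
      (aux_bilin D (aux_hasDerivAt_T hβ 0 t) (aux_hasDerivAt_T hβ 0 t))).inner ℝ
      (aux_hasDerivAt_T hα 0 t)
  have cder : Continuous (fun t : ℝ =>
      ⟪partialE β (0, t) + D (β (0, t)) (β (0, t)), partialT α (0, t)⟫_ℝ
        + ⟪partialT (partialE β) (0, t)
          + (D (partialT β (0, t)) (β (0, t)) + D (β (0, t)) (partialT β (0, t))), α (0, t)⟫_ℝ) :=
    ((cEβ.add (aux_bilin_cont D cβ cβ)).inner cTα).add
      ((cTEβ.add ((aux_bilin_cont D cTβ cβ).add (aux_bilin_cont D cβ cTβ))).inner cα)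
  have hE0 : partialE β (0, 0) = 0 := by
    have h := aux_hasDerivAt_E hβ 0 0
    simp only [(hends _).1] at h
    exact h.unique (hasDerivAt_const _ _)
  have hE1' : partialE β (0, 1) = 0 := by
    have h := aux_hasDerivAt_E hβ 0 1
    simp only [(hends _).2] at h
    exact h.unique (hasDerivAt_const _ _)
  have hzero := intervalIntegral.integral_eq_sub_of_hasDerivAt (a := 0) (b := 1)
    (fun t _ => hder t) (cder.intervalIntegrable _ _)
  simp only [hE0, hE1', (hends 0).1, (hends 0).2, map_zero, add_zero, inner_zero_left,
    sub_zero] at hzero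
  have c1 : Continuous (fun t : ℝ => ⟪partialT β (0, t) + D (α (0, t)) (β (0, t)),
          partialT β (0, t) + D (α (0, t)) (β (0, t))⟫_ℝ) :=
    (cTβ.add (aux_bilin_cont D cα cβ)).inner (cTβ.add (aux_bilin_cont D cα cβ))
  have c2 : Continuous (fun t : ℝ => ⟪β (0, t),
            D (α (0, t)) (D (β (0, t)) (α (0, t)))
              - D (β (0, t)) (D (α (0, t)) (α (0, t)))
              - D (lie (α (0, t)) (β (0, t))) (α (0, t))⟫_ℝ) :=
    cβ.inner (((aux_bilin_cont D cα (aux_bilin_cont D cβ cα)).sub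
      (aux_bilin_cont D cβ (aux_bilin_cont D cα cα))).sub
      (aux_bilin_cont D (aux_bilin_cont lie cα cβ) cα))
  rw [← intervalIntegral.integral_add (c1.intervalIntegrable _ _) (c2.intervalIntegrable _ _)]
  have hadd := intervalIntegral.integral_add (cder.intervalIntegrable (0 : ℝ) 1)
    ((c1.add c2).intervalIntegrable (0 : ℝ) 1) (μ := MeasureTheory.volume)
  rw [hzero, zero_add] at hadd
  refine Eq.trans ?_ hadd
  refine intervalIntegral.integral_congr fun t ht => ?_
  rw [Set.uIcc_of_le zero_le_one] at ht
  have hα1 : ∀ e : ℝ, partialE α (e, t) = partialT β (e, t) + lie (α (e, t)) (β (e, t)) := by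
    intro e
    have h := hΔ (e, t) ht
    rw [sub_add_eq_add_sub, sub_eq_zero] at h
    exact h.symm
  have hα2 : partialE (partialE α) (0, t) = partialT (partialE β) (0, t)
      + (lie (partialE α (0, t)) (β (0, t)) + lie (α (0, t)) (partialE β (0, t))) := by
    have h1 := aux_hasDerivAt_E hEα 0 t
    have h2 := (aux_hasDerivAt_E hTβ 0 t).add
      (aux_bilin lie (aux_hasDerivAt_E hα 0 t) (aux_hasDerivAt_E hβ 0 t))
    rw [← aux_symm hβ]
    refine h1.unique ?_
    rw [funext hα1]
    exact h2
  have hfin := aux_algebra lie D hanti hD (α (0, t)) (β (0, t)) (partialT β (0, t))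
    (partialE β (0, t)) (partialT (partialE β) (0, t))
  rw [← hgeo t ht, ← hα1 0, ← hα2] at hfin
  exact hfin
end

section
/- Let α : ℝ × [0,1] → 𝔤 be a smooth map such that for every ε the curve t ↦ α(ε,t) is a geodesic, and let β : ℝ × [0,1] → 𝔤 be a smooth map with Δ(α,β) = 0. Then β₀ = β(0,·) is a Jacobi field along the geodesic α₀ = α(0,·). -/
open scoped InnerProductSpace

/-- The covariant derivative `∇β = β' + D_α β` of a curve `β` along a curve `α`. -/
noncomputable def covDeriv {G : Type*} [NormedAddCommGroup G] [NormedSpace ℝ G]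
    (D : G →ₗ[ℝ] G →ₗ[ℝ] G) (α β : ℝ → G) : ℝ → G :=
  fun t => deriv β t + D (α t) (β t)

/-- The curvature `R(u,v)w = D_u(D_v w) - D_v(D_u w) - D_{[u,v]}w`. -/
def curv {G : Type*} [AddCommGroup G] [Module ℝ G]
    (lie D : G →ₗ[ℝ] G →ₗ[ℝ] G) (u v w : G) : G :=
  D u (D v w) - D v (D u w) - D (lie u v) w

/-- Product rule for a bilinear map on a finite-dimensional space. -/
lemma hasDerivAt_bilin {G : Type*} [NormedAddCommGroup G] [NormedSpace ℝ G]
    [FiniteDimensional ℝ G] (D : G →ₗ[ℝ] G →ₗ[ℝ] G) {f g : ℝ → G} {f' g' : G} {t : ℝ}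
    (hf : HasDerivAt f f' t) (hg : HasDerivAt g g' t) :
    HasDerivAt (fun s => D (f s) (g s)) (D f' (g t) + D (f t) g') t := by
  let B : G →L[ℝ] (G →L[ℝ] G) := LinearMap.toContinuousLinearMap
    ((LinearMap.toContinuousLinearMap : (G →ₗ[ℝ] G) ≃ₗ[ℝ] (G →L[ℝ] G)).toLinearMap ∘ₗ D)
  have h1 : HasDerivAt (fun s => B (f s)) (B f') t := B.hasFDerivAt.comp_hasDerivAt t hf
  exact h1.clm_apply hg

lemma hasDerivAt_sndVar {G : Type*} [NormedAddCommGroup G] [NormedSpace ℝ G]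
    {f : ℝ × ℝ → G} (e t : ℝ) (hf : DifferentiableAt ℝ f (e, t)) :
    HasDerivAt (fun s => f (e, s)) (partialT f (e, t)) t := by
  have h : HasDerivAt (fun s : ℝ => (e, s)) ((0 : ℝ), (1 : ℝ)) t :=
    (hasDerivAt_const t e).prodMk (hasDerivAt_id t)
  exact hf.hasFDerivAt.comp_hasDerivAt t h

lemma hasDerivAt_fstVar {G : Type*} [NormedAddCommGroup G] [NormedSpace ℝ G]
    {f : ℝ × ℝ → G} (e t : ℝ) (hf : DifferentiableAt ℝ f (e, t)) :
    HasDerivAt (fun s => f (s, t)) (partialE f (e, t)) e := by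
  have h : HasDerivAt (fun s : ℝ => (s, t)) ((1 : ℝ), (0 : ℝ)) e :=
    (hasDerivAt_id e).prodMk (hasDerivAt_const e t)
  exact hf.hasFDerivAt.comp_hasDerivAt e h

lemma partialT_partialE_comm {G : Type*} [NormedAddCommGroup G] [NormedSpace ℝ G]
    {f : ℝ × ℝ → G} (hf : ContDiff ℝ (⊤ : ℕ∞) f) (p : ℝ × ℝ) :
    partialT (partialE f) p = partialE (partialT f) p := by
  have hd : DifferentiableAt ℝ (fderiv ℝ f) p :=
    ((hf.fderiv_right (m := 1) (by norm_cast)).differentiable (by norm_num)) p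
  have hs : IsSymmSndFDerivAt ℝ f p :=
    hf.contDiffAt.isSymmSndFDerivAt (by simp; norm_cast)
  have key : ∀ v w : ℝ × ℝ, fderiv ℝ (fun q => fderiv ℝ f q v) p w
      = fderiv ℝ (fderiv ℝ f) p w v := by
    intro v w
    rw [fderiv_clm_apply hd (differentiableAt_const v)]
    simp
  change fderiv ℝ (fun q => fderiv ℝ f q (1, 0)) p (0, 1)
    = fderiv ℝ (fun q => fderiv ℝ f q (0, 1)) p (1, 0)
  rw [key, key]
  exact hs _ _

lemma contDiff_partial {G : Type*} [NormedAddCommGroup G] [NormedSpace ℝ G]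
    {f : ℝ × ℝ → G} (hf : ContDiff ℝ (⊤ : ℕ∞) f) (v : ℝ × ℝ) :
    Differentiable ℝ (fun q => fderiv ℝ f q v) := fun p =>
  (((hf.fderiv_right (m := 1) (by norm_cast)).differentiable (by norm_num)) p).clm_apply
    (differentiableAt_const v)

/-- Let `α : ℝ × [0,1] → 𝔤` be a smooth map such that for every `ε` the
curve `t ↦ α(ε,t)` is a geodesic, and let `β : ℝ × [0,1] → 𝔤` be a smooth map with
`Δ(α,β) = 0`.  Then `β₀ = β(0,·)` is a Jacobi field along the geodesic `α₀ = α(0,·)`. -/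
theorem transverse_variation_of_geodesics_is_jacobi
    {G : Type*} [NormedAddCommGroup G] [InnerProductSpace ℝ G] [FiniteDimensional ℝ G]
    (lie : G →ₗ[ℝ] G →ₗ[ℝ] G)
    (hanti : ∀ u : G, lie u u = 0)
    (hjac : ∀ u v w : G, lie u (lie v w) = lie (lie u v) w + lie v (lie u w))
    (D : G →ₗ[ℝ] G →ₗ[ℝ] G)
    (hD : ∀ u v w : G,
      2 * ⟪D u v, w⟫_ℝ = ⟪lie u v, w⟫_ℝ + ⟪lie w u, v⟫_ℝ + ⟪lie w v, u⟫_ℝ)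
    (α β : ℝ × ℝ → G) (hα : ContDiff ℝ (⊤ : ℕ∞) α) (hβ : ContDiff ℝ (⊤ : ℕ∞) β)
    (hgeo : ∀ p : ℝ × ℝ, p.2 ∈ Set.Icc (0 : ℝ) 1 →
      partialT α p = -(D (α p) (α p)))
    (hΔ : ∀ p : ℝ × ℝ, p.2 ∈ Set.Icc (0 : ℝ) 1 →
      partialT β p - partialE α p + lie (α p) (β p) = 0) :
    ∀ t ∈ Set.Icc (0 : ℝ) 1,
      covDeriv D (fun s => α (0, s)) (covDeriv D (fun s => α (0, s)) (fun s => β (0, s))) t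
        = curv lie D (α (0, t)) (β (0, t)) (α (0, t)) := by
  have dα : Differentiable ℝ α := hα.differentiable (by simp)
  have dβ : Differentiable ℝ β := hβ.differentiable (by simp)
  have dαE : Differentiable ℝ (partialE α) := contDiff_partial hα (1, 0)
  have dαT : Differentiable ℝ (partialT α) := contDiff_partial hα (0, 1)
  have dβT : Differentiable ℝ (partialT β) := contDiff_partial hβ (0, 1)
  have lanti : ∀ u v, lie v u = - lie u v := by
    intro u v
    have h := hanti (u + v)
    simp only [map_add, LinearMap.add_apply, hanti, zero_add, add_zero] at h
    first | exact eq_neg_of_add_eq_zero_left h | exact eq_neg_of_add_eq_zero_right h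
  have tors : ∀ u v, D u v - D v u = lie u v := by
    intro u v
    refine ext_inner_right ℝ fun w => ?_
    have h1 := hD u v w
    have h2 := hD v u w
    rw [lanti u v, inner_neg_left] at h2
    rw [inner_sub_left]
    linarith
  intro t ht
  have hA : ∀ s, HasDerivAt (fun s => α (0, s)) (partialT α (0, s)) s :=
    fun s => hasDerivAt_sndVar 0 s (dα _)
  have hB : ∀ s, HasDerivAt (fun s => β (0, s)) (partialT β (0, s)) s :=
    fun s => hasDerivAt_sndVar 0 s (dβ _)
  have hF : covDeriv D (fun s => α (0, s)) (fun s => β (0, s))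
      = fun s => partialT β (0, s) + D (α (0, s)) (β (0, s)) := by
    funext s
    simp only [covDeriv, (hB s).deriv]
  have hFH : ∀ s ∈ Set.Icc (0 : ℝ) 1, partialT β (0, s) + D (α (0, s)) (β (0, s))
      = partialE α (0, s) + D (β (0, s)) (α (0, s)) := by
    intro s hs
    have h1 := hΔ (0, s) hs
    have h2 := tors (α (0, s)) (β (0, s))
    rw [← h2] at h1
    rw [← sub_eq_zero, ← h1]
    abel
  have dF := (hasDerivAt_sndVar 0 t (dβT _)).add (hasDerivAt_bilin D (hA t) (hB t))
  have dH := (hasDerivAt_sndVar 0 t (dαE _)).add (hasDerivAt_bilin D (hB t) (hA t))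
  have hu : UniqueDiffWithinAt ℝ (Set.Icc (0 : ℝ) 1) t :=
    uniqueDiffOn_Icc zero_lt_one t ht
  have e1 := hu.eq_deriv _ dF.hasDerivWithinAt
    (dH.hasDerivWithinAt.congr hFH (hFH t ht))
  have e2 : partialE (partialT α) (0, t)
      = -(D (partialE α (0, t)) (α (0, t)) + D (α (0, t)) (partialE α (0, t))) := by
    have h1 := hasDerivAt_fstVar 0 t (dαT (0, t))
    have h2 := hasDerivAt_fstVar 0 t (dα (0, t))
    have h3 := (hasDerivAt_bilin D h2 h2).neg
    refine h1.unique (h3.congr_of_eventuallyEq (Filter.Eventually.of_forall fun s => ?_))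
    exact hgeo (s, t) ht
  have e3 : partialT β (0, t) = partialE α (0, t) - lie (α (0, t)) (β (0, t)) := by
    rw [← sub_eq_zero, ← hΔ (0, t) ht]
    abel
  rw [hF]
  unfold covDeriv curv
  have e4 := dF.deriv
  simp only [Pi.add_def] at e4
  rw [e4, e1, partialT_partialE_comm hα, e2]
  simp only []
  rw [hFH t ht, hgeo (0, t) ht, e3]
  simp only [map_add, map_neg, map_sub, LinearMap.sub_apply]
  abel
end

section
/- Let α₀ : [0,1] → 𝔤 be a geodesic and β₀ a Jacobi field along α₀. Then there exist smooth maps α, β : ℝ × [0,1] → 𝔤 such that α(0,·) = α₀, β(0,·) = β₀, for every ε the curve t ↦ α(ε,t) is a geodesic, and Δ(α,β) = 0; i.e. every Jacobi field arises as the transverse variation of a variation through geodesics. -/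
open scoped InnerProductSpace

section QuadFlow
open Set Filter Topology
open scoped ContDiff

lemma qf_volterra {E : Type*} [NormedAddCommGroup E] [NormedSpace ℝ E] [CompleteSpace E]
    (B : E →L[ℝ] E →L[ℝ] E) :
    ∃ Q : C(Icc (0:ℝ) 1, E) →L[ℝ] C(Icc (0:ℝ) 1, E) →L[ℝ] C(Icc (0:ℝ) 1, E),
      ∀ u v s, Q u v s = ∫ σ in (0:ℝ)..(s : ℝ),
        B (IccExtend zero_le_one u σ) (IccExtend zero_le_one v σ) := by
  have hc : ∀ u v : C(Icc (0:ℝ) 1, E),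
      Continuous fun σ => B (IccExtend zero_le_one u σ) (IccExtend zero_le_one v σ) := by
    intro u v
    have h1 : Continuous (IccExtend (zero_le_one : (0:ℝ) ≤ 1) u) := u.continuous.Icc_extend'
    have h2 : Continuous (IccExtend (zero_le_one : (0:ℝ) ≤ 1) v) := v.continuous.Icc_extend'
    fun_prop
  have hI : ∀ (u v : C(Icc (0:ℝ) 1, E)) (a b : ℝ), IntervalIntegrable
      (fun σ => B (IccExtend zero_le_one u σ) (IccExtend zero_le_one v σ))
      MeasureTheory.volume a b := fun u v a b => (hc u v).intervalIntegrable a b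
  let q : C(Icc (0:ℝ) 1, E) → C(Icc (0:ℝ) 1, E) → C(Icc (0:ℝ) 1, E) := fun u v =>
    ⟨fun s => ∫ σ in (0:ℝ)..(s : ℝ),
        B (IccExtend zero_le_one u σ) (IccExtend zero_le_one v σ),
      (intervalIntegral.continuous_primitive (hI u v) 0).comp continuous_subtype_val⟩
  have hq : ∀ u v s, q u v s = ∫ σ in (0:ℝ)..(s : ℝ),
        B (IccExtend zero_le_one u σ) (IccExtend zero_le_one v σ) := fun _ _ _ => rfl
  let ql : C(Icc (0:ℝ) 1, E) →ₗ[ℝ] C(Icc (0:ℝ) 1, E) →ₗ[ℝ] C(Icc (0:ℝ) 1, E) :=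
    LinearMap.mk₂ ℝ q
      (by
        intro u u' v; ext s
        rw [ContinuousMap.add_apply, hq, hq, hq, ← intervalIntegral.integral_add (hI _ _ _ _) (hI _ _ _ _)]
        simp [IccExtend])
      (by
        intro c u v; ext s
        rw [ContinuousMap.smul_apply, hq, hq, ← intervalIntegral.integral_smul]
        simp [IccExtend])
      (by
        intro u v v'; ext s
        rw [ContinuousMap.add_apply, hq, hq, hq, ← intervalIntegral.integral_add (hI _ _ _ _) (hI _ _ _ _)]
        simp [IccExtend])
      (by
        intro c u v; ext s
        rw [ContinuousMap.smul_apply, hq, hq, ← intervalIntegral.integral_smul]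
        simp [IccExtend])
  refine ⟨LinearMap.mkContinuous₂ ql ‖B‖ ?_, fun u v s => rfl⟩
  intro u v
  rw [ContinuousMap.norm_le _ (by positivity)]
  intro s
  change ‖q u v s‖ ≤ _
  rw [hq]
  have := intervalIntegral.norm_integral_le_of_norm_le_const (a := 0) (b := (s:ℝ))
    (C := ‖B‖ * ‖u‖ * ‖v‖)
    (f := fun σ => B (IccExtend zero_le_one u σ) (IccExtend zero_le_one v σ)) (by
      intro σ _
      refine (B.le_opNorm₂ _ _).trans ?_
      gcongr
      · exact u.norm_coe_le_norm _
      · exact v.norm_coe_le_norm _)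
  refine this.trans ?_
  have h0 : |(s:ℝ) - 0| ≤ 1 := by
    rw [sub_zero, abs_of_nonneg s.2.1]; exact s.2.2
  exact mul_le_of_le_one_right (by positivity) h0

lemma qf_inverse {X : Type*} [NormedAddCommGroup X] [NormedSpace ℝ X] [CompleteSpace X]
    (Q : X →L[ℝ] X →L[ℝ] X) :
    ∃ δ > 0, ∃ δ' > 0, ∃ Ψ : ℝ × X → X,
      (∀ t u, |t| < δ → ‖u‖ < δ → ContDiffAt ℝ ∞ Ψ (t, u) ∧ ‖Ψ (t, u)‖ < δ' ∧
        Ψ (t, u) = u + t • Q (Ψ (t, u)) (Ψ (t, u)) ∧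
        ∀ v, ‖v‖ < δ' → v = u + t • Q v v → v = Ψ (t, u)) := by
  let F : ℝ × X → ℝ × X := fun p => (p.1, p.2 - p.1 • Q p.2 p.2)
  have hF : ContDiff ℝ ω F := by
    have h1 : ContDiff ℝ ω (fun p : ℝ × X => Q p.2 p.2) :=
      (Q.contDiff.comp contDiff_snd).clm_apply contDiff_snd
    exact contDiff_fst.prodMk (contDiff_snd.sub (contDiff_fst.smul h1))
  have hF0 : F 0 = 0 := by simp [F]
  have hF' : HasFDerivAt F ((ContinuousLinearEquiv.refl ℝ (ℝ × X) : (ℝ × X) ≃L[ℝ] (ℝ × X)) : (ℝ × X) →L[ℝ] (ℝ × X)) 0 := by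
    have h1 : HasFDerivAt (fun p : ℝ × X => p.1) (ContinuousLinearMap.fst ℝ ℝ X) 0 := hasFDerivAt_fst
    have h2 : HasFDerivAt (fun p : ℝ × X => p.2) (ContinuousLinearMap.snd ℝ ℝ X) 0 := hasFDerivAt_snd
    have h3 : HasFDerivAt (fun p : ℝ × X => Q p.2 p.2) _ 0 := (Q.hasFDerivAt.comp 0 h2).clm_apply h2
    have h4 := h1.prodMk (h2.sub (h1.smul h3))
    convert! h4 using 1
    ext p <;> simp
  let e := hF.contDiffAt.toOpenPartialHomeomorph F hF' (by simp)
  have he : ∀ p, e p = F p := fun p => rfl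
  have h0s : (0 : ℝ × X) ∈ e.source := hF.contDiffAt.mem_toOpenPartialHomeomorph_source hF' (by simp)
  have h0t : (0 : ℝ × X) ∈ e.target := by
    have := hF.contDiffAt.image_mem_toOpenPartialHomeomorph_target hF' (by simp)
    rwa [hF0] at this
  have hs0 : e.symm 0 = 0 := by
    have := e.left_inv h0s
    rwa [he, hF0] at this
  have hsm : ContDiffAt ℝ ω e.symm 0 := by
    apply e.contDiffAt_symm h0t (f₀' := ContinuousLinearEquiv.refl ℝ (ℝ × X))
    · rw [hs0]; exact hF'
    · rw [hs0]; exact hF.contDiffAt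
  obtain ⟨r, hr, hrs⟩ := Metric.mem_nhds_iff.1 (e.open_source.mem_nhds h0s)
  have hevt : ∀ᶠ p in 𝓝 (0 : ℝ × X), p ∈ e.target := e.open_target.mem_nhds h0t
  have hev := (hsm.eventually (by simp)).and (hevt.and
      (hsm.continuousAt.eventually (by rw [hs0]; exact Metric.ball_mem_nhds 0 hr)))
  obtain ⟨d, hd, hds⟩ := Metric.eventually_nhds_iff_ball.1 hev
  refine ⟨min d r, lt_min hd hr, r, hr, fun p => (e.symm p).2, ?_⟩
  intro t u ht hu
  have hmem : (t, u) ∈ Metric.ball (0 : ℝ × X) d := by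
    rw [mem_ball_zero_iff, Prod.norm_def]
    exact max_lt (lt_of_lt_of_le ht (min_le_left _ _)) (lt_of_lt_of_le hu (min_le_left _ _))
  obtain ⟨k1, k2, k3⟩ := hds _ hmem
  have hinv : F (e.symm (t, u)) = (t, u) := e.right_inv k2
  have hfst : (e.symm (t, u)).1 = t := congrArg Prod.fst hinv
  have hsnd : (e.symm (t, u)).2 - (e.symm (t, u)).1 • Q (e.symm (t, u)).2 (e.symm (t, u)).2 = u :=
    congrArg Prod.snd hinv
  refine ⟨contDiffAt_snd.comp _ (k1.of_le le_top), ?_, ?_, ?_⟩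
  · rw [dist_zero_right, Prod.norm_def] at k3
    exact (max_lt_iff.1 k3).2
  · rw [hfst] at hsnd
    exact sub_eq_iff_eq_add.1 hsnd
  · intro v hv hve
    have hvs : (t, v) ∈ e.source := hrs (by
      rw [mem_ball_zero_iff, Prod.norm_def]
      exact max_lt (lt_of_lt_of_le ht (min_le_right _ _)) hv)
    have : e (t, v) = (t, u) := by
      rw [he]; exact Prod.ext rfl (sub_eq_iff_eq_add.2 hve)
    have h2 : e.symm (t, u) = (t, v) := by rw [← this]; exact e.left_inv hvs
    simp [h2]

lemma qf_uniq {E : Type*} [NormedAddCommGroup E] [NormedSpace ℝ E]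
    (B : E →L[ℝ] E →L[ℝ] E) (u v : ℝ → E)
    (hu : ∀ t ∈ Icc (0:ℝ) 1, HasDerivWithinAt u (B (u t) (u t)) (Icc 0 1) t)
    (hv : ∀ t ∈ Icc (0:ℝ) 1, HasDerivWithinAt v (B (v t) (v t)) (Icc 0 1) t)
    (h0 : u 0 = v 0) : ∀ t ∈ Icc (0:ℝ) 1, u t = v t := by
  have hcu : ContinuousOn u (Icc 0 1) := fun t ht => (hu t ht).continuousWithinAt
  have hcv : ContinuousOn v (Icc 0 1) := fun t ht => (hv t ht).continuousWithinAt
  obtain ⟨Mu, hMu⟩ := isCompact_Icc.exists_bound_of_continuousOn hcu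
  obtain ⟨Mv, hMv⟩ := isCompact_Icc.exists_bound_of_continuousOn hcv
  intro t ht
  refine sub_eq_zero.1 (eq_zero_of_abs_deriv_le_mul_abs_self_of_eq_zero_right
    (f := fun t => u t - v t) (f' := fun t => B (u t) (u t) - B (v t) (v t))
    (K := ‖B‖ * (Mu + Mv)) (hcu.sub hcv) ?_ (sub_eq_zero.2 h0) ?_ t ht)
  · intro x hx
    exact ((hu x (Ico_subset_Icc_self hx)).sub (hv x (Ico_subset_Icc_self hx))).mono_of_mem_nhdsWithin
      (Icc_mem_nhdsGE_of_mem hx)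
  · intro x hx
    have hx' := Ico_subset_Icc_self hx
    have e : B (u x) (u x) - B (v x) (v x) = B (u x) (u x - v x) + B (u x - v x) (v x) := by
      simp
    rw [e]
    have h1 := B.le_opNorm₂ (u x) (u x - v x)
    have h2 := B.le_opNorm₂ (u x - v x) (v x)
    calc _ ≤ ‖B (u x) (u x - v x)‖ + ‖B (u x - v x) (v x)‖ := norm_add_le _ _
      _ ≤ ‖B‖ * ‖u x‖ * ‖u x - v x‖ + ‖B‖ * ‖u x - v x‖ * ‖v x‖ := add_le_add h1 h2
      _ ≤ ‖B‖ * Mu * ‖u x - v x‖ + ‖B‖ * ‖u x - v x‖ * Mv := by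
        gcongr
        · exact hMu x hx'
        · exact hMv x hx'
      _ = _ := by ring

lemma qf_local {E : Type*} [NormedAddCommGroup E] [NormedSpace ℝ E] [CompleteSpace E]
    (B : E →L[ℝ] E →L[ℝ] E) :
    ∃ δ > 0, ∃ φ : ℝ × E → E, ∀ t x, |t| < δ → ‖x‖ < δ →
      ContDiffAt ℝ ∞ φ (t, x) ∧ φ (0, x) = x ∧
      HasDerivAt (fun τ => φ (τ, x)) (B (φ (t, x)) (φ (t, x))) t := by
  obtain ⟨Q, hQ⟩ := qf_volterra B
  obtain ⟨δ, hδ, δ', hδ', Ψ, hΨ⟩ := qf_inverse Q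
  let cst : E →L[ℝ] C(Icc (0:ℝ) 1, E) := LinearMap.mkContinuous
    { toFun := fun x => ContinuousMap.const _ x
      map_add' := fun x y => by ext s; simp
      map_smul' := fun c y => by ext s; simp } 1 (by
        intro x
        rw [ContinuousMap.norm_le _ (by positivity)]
        intro s; simp)
  have hcst : ∀ x s, cst x s = x := fun x s => rfl
  have hcn : ∀ x, ‖cst x‖ ≤ ‖x‖ := fun x => by
    rw [ContinuousMap.norm_le _ (by positivity)]
    intro s; simp [hcst]
  let one : Icc (0:ℝ) 1 := ⟨1, by simp⟩
  let φ : ℝ × E → E := fun p => Ψ (p.1, cst p.2) one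
  have hint : ∀ t x, |t| < δ → ‖x‖ < δ → ∀ s : Icc (0:ℝ) 1, Ψ (t, cst x) s = x + t • ∫ σ in (0:ℝ)..(s : ℝ),
        B (IccExtend zero_le_one (Ψ (t, cst x)) σ) (IccExtend zero_le_one (Ψ (t, cst x)) σ) := by
    intro t x ht hx s
    have h := (hΨ t (cst x) ht ((hcn x).trans_lt hx)).2.2.1
    have h2 := congrArg (fun w : C(Icc (0:ℝ) 1, E) => w s) h
    simp only [ContinuousMap.add_apply, ContinuousMap.smul_apply, hQ, hcst] at h2
    exact h2
  have hkey : ∀ t x, |t| < δ → ‖x‖ < δ → ∀ s : Icc (0:ℝ) 1, Ψ (t, cst x) s = φ (t * s, x) := by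
    intro t x ht hx s
    set u := Ψ (t, cst x) with hu
    have hm : ∀ σ : Icc (0:ℝ) 1, (s : ℝ) * σ ∈ Icc (0:ℝ) 1 := fun σ =>
      ⟨mul_nonneg s.2.1 σ.2.1, mul_le_one₀ s.2.2 σ.2.1 σ.2.2⟩
    let v : C(Icc (0:ℝ) 1, E) := ⟨fun σ => u ⟨(s : ℝ) * σ, hm σ⟩, by fun_prop⟩
    have hv : ∀ σ, v σ = u ⟨(s : ℝ) * σ, hm σ⟩ := fun _ => rfl
    have hts : |t * s| < δ := by
      rw [abs_mul, abs_of_nonneg s.2.1]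
      exact (mul_le_of_le_one_right (abs_nonneg t) s.2.2).trans_lt ht
    have hvn : ‖v‖ < δ' := by
      refine lt_of_le_of_lt ?_ (hΨ t (cst x) ht ((hcn x).trans_lt hx)).2.1
      rw [ContinuousMap.norm_le _ (by positivity)]
      intro σ
      exact u.norm_coe_le_norm _
    have hveq : v = cst x + (t * s) • Q v v := by
      ext σ
      rw [ContinuousMap.add_apply, ContinuousMap.smul_apply, hQ, hcst, hv, hint t x ht hx, mul_smul]
      congr 2
      have h3 := intervalIntegral.smul_integral_comp_mul_left
        (a := 0) (b := (σ : ℝ)) (fun ρ => B (IccExtend zero_le_one u ρ) (IccExtend zero_le_one u ρ)) (s : ℝ)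
      rw [mul_zero] at h3
      rw [← h3]
      congr 1
      apply intervalIntegral.integral_congr
      intro ρ hρ
      rw [uIcc_of_le σ.2.1] at hρ
      have hρ' : ρ ∈ Icc (0:ℝ) 1 := ⟨hρ.1, hρ.2.trans σ.2.2⟩
      simp only
      rw [IccExtend_of_mem _ _ hρ', IccExtend_of_mem _ _ (hm ⟨ρ, hρ'⟩), hv]
    have := (hΨ (t * s) (cst x) hts ((hcn x).trans_lt hx)).2.2.2 v hvn hveq
    have h5 : v one = φ (t * s, x) := by rw [this]
    rw [← h5, hv]
    congr 1
    ext
    simp [one]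
  have hsm : ∀ t x, |t| < δ → ‖x‖ < δ → ContDiffAt ℝ ∞ φ (t, x) := by
    intro t x ht hx
    have h1 := (hΨ t (cst x) ht ((hcn x).trans_lt hx)).1
    have h2 : ContDiffAt ℝ ∞ (fun p : ℝ × E => (p.1, cst p.2)) (t, x) :=
      contDiffAt_fst.prodMk (cst.contDiff.contDiffAt.comp _ contDiffAt_snd)
    have h3 : ContDiffAt ℝ ∞ (fun p : ℝ × E => Ψ (p.1, cst p.2)) (t, x) :=
      ContDiffAt.comp (t, x) (g := Ψ) h1 h2
    exact (ContinuousMap.evalCLM ℝ one).contDiff.contDiffAt.comp _ h3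
  refine ⟨δ, hδ, φ, fun t x ht hx => ⟨hsm t x ht hx, ?_, ?_⟩⟩
  · have h := hkey 0 x (by simpa using hδ) hx one
    have h2 := hint 0 x (by simpa using hδ) hx one
    rw [zero_mul] at h
    rw [← h, h2]; simp
  · have hdiff : DifferentiableAt ℝ (fun τ => φ (τ, x)) t := by
      have h1 := (hsm t x ht hx).differentiableAt (by simp)
      have h2 : DifferentiableAt ℝ (fun τ : ℝ => (τ, x)) t := by fun_prop
      exact DifferentiableAt.comp (g := φ) t h1 h2
    obtain ⟨t1, s, ht1, ht1n, hts⟩ : ∃ (t1 : ℝ) (s : Icc (0:ℝ) 1), |t1| < δ ∧ t1 ≠ 0 ∧ t1 * s = t := by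
      by_cases h : t = 0
      · exact ⟨δ / 2, ⟨0, by simp⟩, by rw [abs_of_pos (by positivity)]; linarith, by positivity, by simp [h]⟩
      · exact ⟨t, one, ht, h, by simp [one]⟩
    set u := Ψ (t1, cst x) with hu
    have huc : Continuous (IccExtend (zero_le_one : (0:ℝ) ≤ 1) u) := u.continuous.Icc_extend'
    have hfc : Continuous fun σ => B (IccExtend zero_le_one u σ) (IccExtend zero_le_one u σ) := by fun_prop
    have hg : HasDerivAt (fun s' : ℝ => x + t1 • ∫ σ in (0:ℝ)..s',
        B (IccExtend zero_le_one u σ) (IccExtend zero_le_one u σ))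
        (t1 • B (IccExtend zero_le_one u s) (IccExtend zero_le_one u s)) s :=
      ((hfc.integral_hasStrictDerivAt 0 (s:ℝ)).hasDerivAt.const_smul t1).const_add x
    have hg' : HasDerivWithinAt (fun s' : ℝ => φ (t1 * s', x))
        (t1 • B (IccExtend zero_le_one u s) (IccExtend zero_le_one u s)) (Icc 0 1) s := by
      refine hg.hasDerivWithinAt.congr_of_mem ?_ s.2
      intro s' hs'
      have := hkey t1 x ht1 hx ⟨s', hs'⟩
      rw [← this, hint t1 x ht1 hx ⟨s', hs'⟩]
    have hd := hdiff.hasDerivAt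
    rw [← hts] at hd
    have hd2 : HasDerivAt (fun s' : ℝ => φ (t1 * s', x)) (t1 • deriv (fun τ => φ (τ, x)) (t1 * s)) s := by
      have := HasDerivAt.scomp (s : ℝ) hd ((hasDerivAt_id (s:ℝ)).const_mul t1)
      simpa [Function.comp_def] using this
    have heq := (uniqueDiffOn_Icc (zero_lt_one (α := ℝ)) (s:ℝ) s.2).eq_deriv _ hg' hd2.hasDerivWithinAt
    have heq2 := smul_right_injective E ht1n heq
    rw [IccExtend_of_mem _ _ s.2] at heq2
    have h6 : u ⟨s, s.2⟩ = φ (t, x) := by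
      rw [hu, hkey t1 x ht1 hx, hts]
    rw [h6, hts] at heq2
    rw [heq2]
    exact hdiff.hasDerivAt

lemma qf_comm {E : Type*} [NormedAddCommGroup E] [NormedSpace ℝ E]
    (B : E →L[ℝ] E →L[ℝ] E) (δ : ℝ) (φ : ℝ × E → E)
    (h : ∀ t x, |t| < δ → ‖x‖ < δ →
      ContDiffAt ℝ ∞ φ (t, x) ∧ φ (0, x) = x ∧
      HasDerivAt (fun τ => φ (τ, x)) (B (φ (t, x)) (φ (t, x))) t)
    (t : ℝ) (x : E) (ht : |t| < δ) (hx : ‖x‖ < δ) (c₁ c₂ : ℝ) :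
    fderiv ℝ φ (t, x) (c₁, c₂ • B x x) = (c₁ + c₂) • B (φ (t, x)) (φ (t, x)) := by
  have hδ : 0 < δ := (abs_nonneg t).trans_lt ht
  have h00 : |(0:ℝ)| < δ := by simpa using hδ
  have hF : HasFDerivAt φ (fderiv ℝ φ (t, x)) (t, x) :=
    ((h t x ht hx).1.differentiableAt (by simp)).hasFDerivAt
  have e1 : fderiv ℝ φ (t, x) (1, 0) = B (φ (t, x)) (φ (t, x)) := by
    have h1 : HasDerivAt (fun τ : ℝ => (τ, x)) ((1 : ℝ), (0 : E)) t :=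
      (hasDerivAt_id t).prodMk (hasDerivAt_const t x)
    exact (HasFDerivAt.comp_hasDerivAt (l := φ) t hF h1).unique (h t x ht hx).2.2
  have e2 : fderiv ℝ φ (t, x) (0, B x x) = B (φ (t, x)) (φ (t, x)) := by
    have hd0 := (h 0 x h00 hx).2.2
    rw [(h 0 x h00 hx).2.1] at hd0
    have h1 : HasDerivAt (fun σ : ℝ => (t, φ (σ, x))) ((0 : ℝ), B x x) 0 :=
      (hasDerivAt_const 0 t).prodMk hd0
    have hF' : HasFDerivAt φ (fderiv ℝ φ (t, x)) (t, φ (0, x)) := by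
      rw [(h 0 x h00 hx).2.1]; exact hF
    have h2 : HasDerivAt (fun σ : ℝ => φ (t, φ (σ, x))) (fderiv ℝ φ (t, x) (0, B x x)) 0 :=
      HasFDerivAt.comp_hasDerivAt (l := φ) 0 hF' h1
    have h3 : HasDerivAt (fun σ : ℝ => φ (t + σ, x)) (B (φ (t, x)) (φ (t, x))) 0 := by
      have := (h t x ht hx).2.2
      rw [← add_zero t] at this
      simpa using this.comp_const_add t 0
    have hev1 : ∀ᶠ σ in 𝓝 (0:ℝ), ‖φ (σ, x)‖ < δ := by
      have hc : ContinuousAt (fun σ => ‖φ (σ, x)‖) 0 := hd0.continuousAt.norm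
      apply hc.eventually_lt continuousAt_const
      rw [(h 0 x h00 hx).2.1]; exact hx
    have hev2 : ∀ᶠ σ in 𝓝 (0:ℝ), |t| + |σ| < δ := by
      have hc : ContinuousAt (fun σ : ℝ => |t| + |σ|) 0 := by fun_prop
      apply hc.eventually_lt continuousAt_const
      simpa using ht
    refine h2.unique (h3.congr_of_eventuallyEq ?_)
    filter_upwards [hev1, hev2] with σ hσ1 hσ2
    have hts : ∀ s ∈ Icc (0:ℝ) 1, |t * s| ≤ |t| := by
      intro s hs
      rw [abs_mul, abs_of_nonneg hs.1]
      exact mul_le_of_le_one_right (abs_nonneg t) hs.2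
    have hσ : |σ| < δ := by linarith [abs_nonneg t]
    have := qf_uniq (t • B) (fun s => φ (t * s, φ (σ, x))) (fun s => φ (t * s + σ, x)) ?_ ?_ ?_ 1 (by simp)
    · simpa using this
    · intro s hs
      have hd := (h (t * s) (φ (σ, x)) ((hts s hs).trans_lt ht) hσ1).2.2
      have := HasDerivAt.scomp s hd ((hasDerivAt_id s).const_mul t)
      simp only [mul_one] at this
      exact this.hasDerivWithinAt
    · intro s hs
      have hb : |t * s + σ| < δ := (abs_add_le _ _).trans_lt (by linarith [hts s hs])
      have hd := (h (t * s + σ) x hb hx).2.2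
      have := HasDerivAt.scomp s hd (((hasDerivAt_id s).const_mul t).add_const σ)
      simp only [mul_one] at this
      exact this.hasDerivWithinAt
    · simp only [mul_zero, zero_add]
      exact (h 0 _ h00 hσ1).2.1
  have : ((c₁, c₂ • B x x) : ℝ × E) = c₁ • (1, 0) + c₂ • (0, B x x) := by simp
  rw [this, map_add, map_smul, map_smul, e1, e2, add_smul]

lemma qf_flow {E : Type*} [NormedAddCommGroup E] [NormedSpace ℝ E] [CompleteSpace E]
    (B : E →L[ℝ] E →L[ℝ] E) (M : ℝ) (hM : 0 < M) :
    ∃ η > 0, ∃ φ : ℝ × E → E, ∀ t x, |t| < η → ‖x‖ < M →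
      ContDiffAt ℝ ∞ φ (t, x) ∧ φ (0, x) = x ∧
      ∀ c₁ c₂ : ℝ, fderiv ℝ φ (t, x) (c₁, c₂ • B x x) = (c₁ + c₂) • B (φ (t, x)) (φ (t, x)) := by
  obtain ⟨δ, hδ, φ, hφ⟩ := qf_local B
  obtain ⟨l, hl, hlM⟩ : ∃ l : ℝ, 0 < l ∧ M = l * δ := ⟨M / δ, by positivity, by field_simp⟩
  refine ⟨δ / l, by positivity, fun p => l • φ (l * p.1, l⁻¹ • p.2), ?_⟩
  intro t x ht hx
  have ht' : |l * t| < δ := by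
    rw [abs_mul, abs_of_pos hl]
    rw [lt_div_iff₀ hl] at ht
    linarith
  have hx' : ‖l⁻¹ • x‖ < δ := by
    rw [norm_smul, norm_inv, Real.norm_of_nonneg hl.le, inv_mul_lt_iff₀ hl]
    rwa [hlM] at hx
  obtain ⟨h1, h2, h3⟩ := hφ (l * t) (l⁻¹ • x) ht' hx'
  have hm : ContDiff ℝ ∞ (fun p : ℝ × E => (l * p.1, l⁻¹ • p.2)) := by fun_prop
  refine ⟨?_, ?_, ?_⟩
  · exact (ContDiffAt.comp (g := φ) (t, x) h1 hm.contDiffAt).const_smul l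
  · simp [h2, smul_smul, hl.ne']
  · intro c₁ c₂
    have hF : HasFDerivAt φ (fderiv ℝ φ (l * t, l⁻¹ • x)) (l * t, l⁻¹ • x) :=
      (h1.differentiableAt (by simp)).hasFDerivAt
    have hmd : HasFDerivAt (fun p : ℝ × E => (l * p.1, l⁻¹ • p.2))
        ((l • ContinuousLinearMap.fst ℝ ℝ E).prod (l⁻¹ • ContinuousLinearMap.snd ℝ ℝ E)) (t, x) :=
      (hasFDerivAt_fst.const_mul l).prodMk (hasFDerivAt_snd.const_smul l⁻¹)
    have hc := (HasFDerivAt.comp (g := φ) (t, x) hF hmd).const_smul l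
    have hc' := hc.fderiv
    have hrw : fderiv ℝ (fun p : ℝ × E => l • φ (l * p.1, l⁻¹ • p.2)) (t, x)
      = l • ((fderiv ℝ φ (l * t, l⁻¹ • x)).comp
        ((l • ContinuousLinearMap.fst ℝ ℝ E).prod (l⁻¹ • ContinuousLinearMap.snd ℝ ℝ E))) := hc'
    rw [hrw]
    have key := qf_comm B δ φ hφ (l * t) (l⁻¹ • x) ht' hx' (l * c₁) (l * c₂)
    have harg : l⁻¹ • c₂ • B x x = (l * c₂) • B (l⁻¹ • x) (l⁻¹ • x) := by
      simp only [map_smul, smul_apply, smul_smul]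
      congr 1
      field_simp
    simp only [smul_apply, ContinuousLinearMap.comp_apply,
      ContinuousLinearMap.prod_apply, ContinuousLinearMap.coe_fst', ContinuousLinearMap.coe_snd',
      smul_eq_mul]
    rw [harg, key]
    simp only [map_smul, smul_apply, smul_smul]
    congr 1
    ring

lemma qf_family {E : Type*} [NormedAddCommGroup E] [NormedSpace ℝ E] [CompleteSpace E]
    (B : E →L[ℝ] E →L[ℝ] E) (z : ℝ → E) (hz : ContDiff ℝ ∞ z) (T M : ℝ) (hT : 0 < T) (hM : 0 < M)
    (hb : ∀ (ε c : ℝ) (u : ℝ → E), 0 ≤ c → c ≤ 1 → u 0 = z ε →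
      (∀ t ∈ Ioo (-T) T, HasDerivAt u (c • B (u t) (u t)) t) → ∀ t ∈ Ioo (-T) T, ‖u t‖ < M) :
    ∃ w : ℝ × ℝ → E, (∀ ε, w (ε, 0) = z ε) ∧ ∀ ε, ∀ t ∈ Ioo (-T) T,
      ContDiffAt ℝ ∞ w (ε, t) ∧ HasDerivAt (fun τ => w (ε, τ)) (B (w (ε, t)) (w (ε, t))) t := by
  obtain ⟨η, hη, φ, hφ⟩ := qf_flow B M hM
  obtain ⟨n, hn⟩ := exists_nat_gt (T / η)
  have hn0 : (0:ℝ) < n := lt_trans (by positivity) hn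
  have hTn : T / n < η := by
    rw [div_lt_iff₀ hη] at hn
    rw [div_lt_iff₀ hn0]; linarith
  have hsmall : ∀ t ∈ Ioo (-T) T, |t / n| < η := by
    intro t ht
    rw [abs_div, abs_of_pos hn0]
    refine lt_of_le_of_lt ?_ hTn
    gcongr
    exact (abs_lt.2 ht).le
  have main : ∀ k : ℕ, k ≤ n → ∃ w : ℝ × ℝ → E, (∀ ε, w (ε, 0) = z ε) ∧ ∀ ε, ∀ t ∈ Ioo (-T) T,
      ContDiffAt ℝ ∞ w (ε, t) ∧
      HasDerivAt (fun τ => w (ε, τ)) (((k:ℝ) / n) • B (w (ε, t)) (w (ε, t))) t := by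
    intro k
    induction k with
    | zero =>
      intro _
      refine ⟨fun p => z p.1, fun ε => rfl, fun ε t ht => ⟨(hz.comp contDiff_fst).contDiffAt, ?_⟩⟩
      simpa using hasDerivAt_const t (z ε)
    | succ k ih =>
      intro hk
      obtain ⟨w, hw0, hw⟩ := ih (by omega)
      have hkn : (k:ℝ) / n ≤ 1 := by
        rw [div_le_one hn0]; exact_mod_cast (by omega : k ≤ n)
      have hwM : ∀ ε, ∀ t ∈ Ioo (-T) T, ‖w (ε, t)‖ < M := fun ε =>
        hb ε ((k:ℝ) / n) (fun τ => w (ε, τ)) (by positivity) hkn (hw0 ε) (fun t ht => (hw ε t ht).2)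
      refine ⟨fun p => φ (p.2 / n, w p), ?_, ?_⟩
      · intro ε
        have h0 : (0:ℝ) ∈ Ioo (-T) T := by constructor <;> linarith
        have := (hφ 0 (w (ε, 0)) (by simpa using hη) (hwM ε 0 h0)).2.1
        simp only [zero_div]
        rw [this, hw0]
      · intro ε t ht
        obtain ⟨h1, -, h3⟩ := hφ (t / n) (w (ε, t)) (hsmall t ht) (hwM ε t ht)
        constructor
        · have : ContDiffAt ℝ ∞ (fun p : ℝ × ℝ => (p.2 / (n:ℝ), w p)) (ε, t) :=
            (contDiffAt_snd.div_const _).prodMk (hw ε t ht).1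
          exact ContDiffAt.comp (g := φ) (ε, t) h1 this
        · have hF : HasFDerivAt φ (fderiv ℝ φ (t / n, w (ε, t))) (t / n, w (ε, t)) :=
            (h1.differentiableAt (by simp)).hasFDerivAt
          have hc : HasDerivAt (fun τ : ℝ => (τ / (n:ℝ), w (ε, τ)))
              (1 / (n:ℝ), ((k:ℝ) / n) • B (w (ε, t)) (w (ε, t))) t :=
            ((hasDerivAt_id t).div_const _).prodMk (hw ε t ht).2
          have := HasFDerivAt.comp_hasDerivAt (l := φ) t hF hc
          rw [h3] at this
          convert! this using 2
          push_cast
          ring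
  obtain ⟨w, hw0, hw⟩ := main n le_rfl
  refine ⟨w, hw0, fun ε t ht => ⟨(hw ε t ht).1, ?_⟩⟩
  have := (hw ε t ht).2
  rwa [div_self hn0.ne', one_smul] at this

lemma qf_growth {E : Type*} [NormedAddCommGroup E] [NormedSpace ℝ E]
    (T K : ℝ) (hK : 0 ≤ K) (u u' : ℝ → E)
    (hu : ∀ t ∈ Ioo (-T) T, HasDerivAt u (u' t) t)
    (hb : ∀ t ∈ Ioo (-T) T, ‖u' t‖ ≤ K * ‖u t‖) :
    ∀ t ∈ Ioo (-T) T, ‖u t‖ ≤ ‖u 0‖ * Real.exp (K * T) := by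
  have aux : ∀ v v' : ℝ → E, (∀ t ∈ Ioo (-T) T, HasDerivAt v (v' t) t) →
      (∀ t ∈ Ioo (-T) T, ‖v' t‖ ≤ K * ‖v t‖) → ∀ t ∈ Ico 0 T, ‖v t‖ ≤ ‖v 0‖ * Real.exp (K * T) := by
    intro v v' hv hvb t ht
    have hsub : ∀ x ∈ Icc 0 t, x ∈ Ioo (-T) T := fun x hx =>
      ⟨by linarith [hx.1, ht.1, ht.2], hx.2.trans_lt ht.2⟩
    have := norm_le_gronwallBound_of_norm_deriv_right_le (f := v) (f' := v') (δ := ‖v 0‖) (K := K)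
      (ε := 0) (a := 0) (b := t)
      (fun x hx => (hv x (hsub x hx)).continuousAt.continuousWithinAt)
      (fun x hx => (hv x (hsub x (Ico_subset_Icc_self hx))).hasDerivWithinAt) le_rfl
      (fun x hx => by simpa using hvb x (hsub x (Ico_subset_Icc_self hx))) t ⟨ht.1, le_rfl⟩
    rw [gronwallBound_ε0, sub_zero] at this
    refine this.trans ?_
    gcongr
    exact ht.2.le
  intro t ht
  rcases le_total 0 t with h | h
  · exact aux u u' hu hb t ⟨h, ht.2⟩
  · have := aux (fun s => u (-s)) (fun s => - u' (-s)) (by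
      intro s hs
      have h1 := hu (-s) ⟨by linarith [hs.2], by linarith [hs.1]⟩
      simpa [Function.comp_def] using HasDerivAt.scomp s h1 (hasDerivAt_neg s)) (by
      intro s hs
      simpa using hb (-s) ⟨by linarith [hs.2], by linarith [hs.1]⟩) (-t) ⟨by linarith, by linarith [ht.1]⟩
    simpa using this

/-- The quadratic system satisfied by a geodesic, a linearised geodesic, and the transverse
variation (the last coordinate is a constant that makes the system homogeneous). -/
lemma qf_system {G : Type*} [NormedAddCommGroup G] [NormedSpace ℝ G] [FiniteDimensional ℝ G]
    (lie D : G →ₗ[ℝ] G →ₗ[ℝ] G) :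
    ∃ B : (G × G × G × ℝ) →L[ℝ] (G × G × G × ℝ) →L[ℝ] (G × G × G × ℝ),
      ∀ x y, B x y = (-(D x.1 y.1), -(D x.2.1 y.1) - D x.1 y.2.1,
        x.2.2.2 • y.2.1 - lie x.1 y.2.2.1, 0) := by
  let Bl : (G × G × G × ℝ) →ₗ[ℝ] (G × G × G × ℝ) →ₗ[ℝ] (G × G × G × ℝ) :=
    LinearMap.mk₂ ℝ (fun x y => (-(D x.1 y.1), -(D x.2.1 y.1) - D x.1 y.2.1,
        x.2.2.2 • y.2.1 - lie x.1 y.2.2.1, 0))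
      (by
        intro x x' y
        ext <;> simp [add_smul] <;> abel)
      (by
        intro c x y
        ext <;> simp [smul_sub, smul_smul])
      (by
        intro x y y'
        ext <;> simp <;> abel)
      (by
        intro c x y
        ext <;> simp [smul_sub, smul_smul, mul_comm])
  exact ⟨LinearMap.toContinuousLinearMap (LinearMap.toContinuousLinearMap.toLinearMap ∘ₗ Bl),
    fun x y => rfl⟩

lemma qf_bilin {G : Type*} [NormedAddCommGroup G] [NormedSpace ℝ G] [FiniteDimensional ℝ G]
    (D : G →ₗ[ℝ] G →ₗ[ℝ] G) : ∃ Dc : G →L[ℝ] G →L[ℝ] G, ∀ x y, D x y = Dc x y :=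
  ⟨LinearMap.toContinuousLinearMap (LinearMap.toContinuousLinearMap.toLinearMap ∘ₗ D),
    fun _ _ => rfl⟩

lemma qf_const {T : ℝ} (f : ℝ → ℝ) (hf : ∀ t ∈ Ioo (-T) T, HasDerivAt f 0 t) :
    ∀ t ∈ Ioo (-T) T, f t = f 0 := by
  intro t ht
  have h0 : (0:ℝ) ∈ Ioo (-T) T := by
    have := ht.1.trans ht.2
    constructor <;> linarith
  exact isOpen_Ioo.is_const_of_deriv_eq_zero isPreconnected_Ioo
    (fun x hx => (hf x hx).differentiableAt.differentiableWithinAt)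
    (fun x hx => (hf x hx).deriv) ht h0

/-- Smooth family of solutions of the quadratic system. -/
lemma qf_solution {G : Type*} [NormedAddCommGroup G] [InnerProductSpace ℝ G] [FiniteDimensional ℝ G]
    (lie D : G →ₗ[ℝ] G →ₗ[ℝ] G) (hskew : ∀ u, ⟪u, D u u⟫_ℝ = 0)
    (B : (G × G × G × ℝ) →L[ℝ] (G × G × G × ℝ) →L[ℝ] (G × G × G × ℝ))
    (hB : ∀ x y, B x y = (-(D x.1 y.1), -(D x.2.1 y.1) - D x.1 y.2.1,
        x.2.2.2 • y.2.1 - lie x.1 y.2.2.1, 0)) (A g b : G) :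
    ∃ w : ℝ × ℝ → G × G × G × ℝ,
      (∀ ε, w (ε, 0) = (A + Real.sin ε • g, Real.cos ε • g, b, 1)) ∧
      ∀ ε, ∀ t ∈ Ioo (-2 : ℝ) 2, ContDiffAt ℝ ∞ w (ε, t) ∧
        HasDerivAt (fun τ => w (ε, τ)) (B (w (ε, t)) (w (ε, t))) t ∧ (w (ε, t)).2.2.2 = 1 := by
  obtain ⟨Dc, hDc⟩ := qf_bilin D
  obtain ⟨Lc, hLc⟩ := qf_bilin lie
  set R := ‖A‖ + ‖g‖ with hR
  set K := ‖Dc‖ * R * 2 + ‖Lc‖ * R + 1 with hK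
  have hR0 : 0 ≤ R := by positivity
  have hK0 : 0 ≤ K := by positivity
  set Z := R + ‖b‖ + 1 with hZ
  have hs : ∀ (c : ℝ) (u : ℝ → G × G × G × ℝ),
      (∀ t ∈ Ioo (-2:ℝ) 2, HasDerivAt u (c • B (u t) (u t)) t) →
      ∀ t ∈ Ioo (-2:ℝ) 2, (u t).2.2.2 = (u 0).2.2.2 := by
    intro c u hu
    apply qf_const (fun t => (u t).2.2.2)
    intro t ht
    have h1 := (hu t ht).hasFDerivAt.snd.snd.snd.hasDerivAt
    simpa [hB] using h1
  have hz : ContDiff ℝ ∞ (fun ε : ℝ => ((A + Real.sin ε • g, Real.cos ε • g, b, 1) : G × G × G × ℝ)) := by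
    have h1 : ContDiff ℝ ∞ Real.sin := Real.contDiff_sin
    have h2 : ContDiff ℝ ∞ Real.cos := Real.contDiff_cos
    fun_prop
  have hsg : ∀ ε, ‖A + Real.sin ε • g‖ ≤ R := by
    intro ε
    refine (norm_add_le _ _).trans ?_
    rw [norm_smul]
    have : ‖Real.sin ε‖ ≤ 1 := Real.abs_sin_le_one ε
    have := mul_le_of_le_one_left (norm_nonneg g) this
    linarith
  have hzn : ∀ ε : ℝ, ‖((A + Real.sin ε • g, Real.cos ε • g, b, 1) : G × G × G × ℝ)‖ ≤ Z := by
    intro ε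
    have h1 := hsg ε
    have h2 : ‖Real.cos ε • g‖ ≤ R := by
      rw [norm_smul]
      have : ‖Real.cos ε‖ ≤ 1 := Real.abs_cos_le_one ε
      have := mul_le_of_le_one_left (norm_nonneg g) this
      linarith [norm_nonneg A]
    simp only [Prod.norm_def, norm_one]
    refine max_le (by linarith [norm_nonneg b]) (max_le (by linarith [norm_nonneg b])
      (max_le (by linarith) (by linarith [norm_nonneg b])))
  obtain ⟨w, hw0, hw⟩ := qf_family B _ hz 2 (Z * Real.exp (K * 2) + 1) (by norm_num) (by positivity) (by
    intro ε c u hc0 hc1 hu0 hu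
    have h1 : ∀ t ∈ Ioo (-2:ℝ) 2, (u t).2.2.2 = 1 := by
      intro t ht; rw [hs c u hu t ht, hu0]
    have h2 : ∀ t ∈ Ioo (-2:ℝ) 2, ‖(u t).1‖ ≤ R := by
      intro t ht
      have h3 := qf_const (fun t => ‖(u t).1‖ ^ 2) (by
        intro t ht
        have h4 : HasDerivAt (fun t => (u t).1) (c • -(D (u t).1 (u t).1)) t := by
          have := (hu t ht).hasFDerivAt.fst.hasDerivAt
          simpa [hB] using this
        have h5 := h4.norm_sq
        simpa [inner_smul_right, inner_neg_right, hskew] using h5) t ht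
      have h6 : ‖(u t).1‖ = ‖(u 0).1‖ := by
        have := (sq_eq_sq₀ (norm_nonneg (u t).1) (norm_nonneg (u 0).1)).1 h3
        exact this
      rw [h6, hu0]
      exact hsg ε
    intro t ht
    have := qf_growth 2 K hK0 u _ hu (by
      intro t ht
      rw [norm_smul, Real.norm_of_nonneg hc0]
      refine (mul_le_of_le_one_left (norm_nonneg _) hc1).trans ?_
      rw [hB, h1 t ht]
      have ha := h2 t ht
      set x := u t
      have n1 : ‖x.1‖ ≤ ‖x‖ := norm_fst_le x
      have n2 : ‖x.2.1‖ ≤ ‖x‖ := (norm_fst_le x.2).trans (norm_snd_le x)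
      have n3 : ‖x.2.2.1‖ ≤ ‖x‖ := ((norm_fst_le x.2.2).trans (norm_snd_le x.2)).trans (norm_snd_le x)
      have b1 : ‖D x.1 x.1‖ ≤ ‖Dc‖ * R * ‖x‖ := by
        rw [hDc]; exact (Dc.le_opNorm₂ _ _).trans (by gcongr)
      have b2 : ‖D x.2.1 x.1‖ ≤ ‖Dc‖ * R * ‖x‖ := by
        rw [hDc]; refine (Dc.le_opNorm₂ _ _).trans ?_
        rw [mul_assoc, mul_comm ‖x.2.1‖, ← mul_assoc]; gcongr
      have b3 : ‖D x.1 x.2.1‖ ≤ ‖Dc‖ * R * ‖x‖ := by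
        rw [hDc]; exact (Dc.le_opNorm₂ _ _).trans (by gcongr)
      have b4 : ‖lie x.1 x.2.2.1‖ ≤ ‖Lc‖ * R * ‖x‖ := by
        rw [hLc]; exact (Lc.le_opNorm₂ _ _).trans (by gcongr)
      have p1 : 0 ≤ ‖Dc‖ * R * ‖x‖ := by positivity
      have p2 : 0 ≤ ‖Lc‖ * R * ‖x‖ := by positivity
      have hKx : K * ‖x‖ = 2 * (‖Dc‖ * R * ‖x‖) + ‖Lc‖ * R * ‖x‖ + ‖x‖ := by rw [hK]; ring
      rw [hKx]
      have p3 := norm_nonneg x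
      rw [Prod.norm_mk, Prod.norm_mk, Prod.norm_mk]
      refine max_le ?_ (max_le ?_ (max_le ?_ ?_))
      · rw [norm_neg]; linarith
      · refine (norm_sub_le _ _).trans ?_
        rw [norm_neg]; linarith
      · refine (norm_sub_le _ _).trans ?_
        rw [one_smul]; linarith
      · rw [norm_zero]; linarith) t ht
    have h7 : ‖u 0‖ ≤ Z := by rw [hu0]; exact hzn ε
    have h8 : ‖u 0‖ * Real.exp (K * 2) ≤ Z * Real.exp (K * 2) := by gcongr
    linarith)
  refine ⟨w, hw0, fun ε t ht => ⟨(hw ε t ht).1, (hw ε t ht).2, ?_⟩⟩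
  have := hs 1 (fun τ => w (ε, τ)) (fun t ht => by simpa using (hw ε t ht).2) t ht
  rw [this, hw0]

/-- The `ε`-derivative of a smooth family of solutions of `a' = -D(a, a)` solves the linearised
equation. -/
lemma qf_variation {G : Type*} [NormedAddCommGroup G] [NormedSpace ℝ G]
    (D : G →L[ℝ] G →L[ℝ] G) (a : ℝ × ℝ → G)
    (ha : ∀ ε, ∀ t ∈ Ioo (-2 : ℝ) 2, ContDiffAt ℝ ∞ a (ε, t) ∧
      fderiv ℝ a (ε, t) (0, 1) = -(D (a (ε, t)) (a (ε, t)))) (ε t : ℝ) (ht : t ∈ Ioo (-2 : ℝ) 2) :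
    HasDerivAt (fun τ => fderiv ℝ a (ε, τ) (1, 0))
      (-(D (fderiv ℝ a (ε, t) (1, 0)) (a (ε, t))) - D (a (ε, t)) (fderiv ℝ a (ε, t) (1, 0))) t := by
  have hsm := (ha ε t ht).1
  have hsym : IsSymmSndFDerivAt ℝ a (ε, t) := hsm.isSymmSndFDerivAt (by simp only [minSmoothness_of_isRCLikeNormedField]; norm_cast)
  have hF : HasFDerivAt (fderiv ℝ a) (fderiv ℝ (fderiv ℝ a) (ε, t)) (ε, t) :=
    ((hsm.fderiv_right (m := 1) (by norm_cast)).differentiableAt (by simp)).hasFDerivAt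
  have ha' : HasFDerivAt a (fderiv ℝ a (ε, t)) (ε, t) :=
    (hsm.differentiableAt (by simp)).hasFDerivAt
  have h1 : HasDerivAt (fun τ : ℝ => (ε, τ)) ((0 : ℝ), (1 : ℝ)) t :=
    (hasDerivAt_const t ε).prodMk (hasDerivAt_id t)
  have h2 : HasDerivAt (fun τ => fderiv ℝ a (ε, τ)) (fderiv ℝ (fderiv ℝ a) (ε, t) (0, 1)) t :=
    HasFDerivAt.comp_hasDerivAt (l := fderiv ℝ a) t hF h1
  have h3 : HasDerivAt (fun τ => fderiv ℝ a (ε, τ) (1, 0))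
      (fderiv ℝ (fderiv ℝ a) (ε, t) (0, 1) (1, 0)) t := by
    simpa using h2.clm_apply (hasDerivAt_const t ((1 : ℝ), (0 : ℝ)))
  convert! h3 using 1
  rw [hsym.eq (0, 1) (1, 0)]
  have h4 : HasFDerivAt (fun p => fderiv ℝ a p (0, 1))
      ((ContinuousLinearMap.apply ℝ G ((0 : ℝ), (1 : ℝ))).comp (fderiv ℝ (fderiv ℝ a) (ε, t))) (ε, t) :=
    (ContinuousLinearMap.apply ℝ G ((0 : ℝ), (1 : ℝ))).hasFDerivAt.comp (ε, t) hF
  have h5 : HasFDerivAt (fun p => -(D (a p) (a p))) _ (ε, t) :=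
    ((D.hasFDerivAt.comp (ε, t) ha').clm_apply ha').neg
  have hev : (fun p => fderiv ℝ a p (0, 1)) =ᶠ[𝓝 (ε, t)] fun p => -(D (a p) (a p)) := by
    have : ∀ᶠ p : ℝ × ℝ in 𝓝 (ε, t), p.2 ∈ Ioo (-2 : ℝ) 2 :=
      continuousAt_snd.eventually (isOpen_Ioo.mem_nhds ht)
    filter_upwards [this] with p hp
    exact (ha p.1 p.2 hp).2
  have h6 := h4.unique (h5.congr_of_eventuallyEq hev)
  have h7 := congrArg (fun L : ℝ × ℝ →L[ℝ] G => L (1, 0)) h6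
  simp at h7
  rw [h7]
  abel

/-- Multiplying by a cutoff in `t`. -/
lemma qf_cutoff {G : Type*} [NormedAddCommGroup G] [NormedSpace ℝ G] (a : ℝ × ℝ → G)
    (ha : ∀ ε, ∀ t ∈ Ioo (-2 : ℝ) 2, ContDiffAt ℝ ∞ a (ε, t)) :
    ∃ a' : ℝ × ℝ → G, ContDiff ℝ ∞ a' ∧ ∀ p : ℝ × ℝ, p.2 ∈ Icc (0:ℝ) 1 → a' =ᶠ[𝓝 p] a := by
  let χ : ContDiffBump (0:ℝ) := ⟨3/2, 7/4, by norm_num, by norm_num⟩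
  refine ⟨fun p => χ p.2 • a p, ?_, ?_⟩
  · rw [contDiff_iff_contDiffAt]
    rintro ⟨ε, t⟩
    by_cases ht : t ∈ Ioo (-2 : ℝ) 2
    · exact (χ.contDiff.contDiffAt.comp (ε, t) contDiffAt_snd).smul (ha ε t ht)
    · have h1 : t ∈ (Metric.closedBall (0:ℝ) (7/4))ᶜ := by
        intro h
        rw [mem_closedBall_zero_iff, Real.norm_eq_abs, abs_le] at h
        exact ht ⟨by linarith [h.1], by linarith [h.2]⟩
      have h2 : ∀ᶠ p : ℝ × ℝ in 𝓝 (ε, t), p.2 ∈ (Metric.closedBall (0:ℝ) (7/4))ᶜ :=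
        continuousAt_snd.eventually (Metric.isClosed_closedBall.isOpen_compl.mem_nhds h1)
      refine (contDiffAt_const (c := (0 : G))).congr_of_eventuallyEq ?_
      filter_upwards [h2] with p hp
      have : χ p.2 = 0 := by
        apply χ.zero_of_le_dist
        have : ¬ dist p.2 0 ≤ 7/4 := hp
        exact (not_le.1 this).le
      rw [this, zero_smul]
  · intro p hp
    have h2 : ∀ᶠ q : ℝ × ℝ in 𝓝 p, q.2 ∈ Ioo (-3/2 : ℝ) (3/2) :=
      continuousAt_snd.eventually (isOpen_Ioo.mem_nhds ⟨by linarith [hp.1], by linarith [hp.2]⟩)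
    filter_upwards [h2] with q hq
    have : χ q.2 = 1 := by
      apply χ.one_of_mem_closedBall
      change q.2 ∈ Metric.closedBall (0:ℝ) (3/2)
      rw [mem_closedBall_zero_iff, Real.norm_eq_abs, abs_le]
      exact ⟨by linarith [hq.1], hq.2.le⟩
    rw [this, one_smul]

end QuadFlow

/-- Let `α₀ : [0,1] → 𝔤` be a geodesic and `β₀` a Jacobi field along
`α₀`.  Then there exist smooth maps `α β : ℝ × [0,1] → 𝔤` such that `α(0,·) = α₀`,
`β(0,·) = β₀`, for every `ε` the curve `t ↦ α(ε,t)` is a geodesic, and `Δ(α,β) = 0`: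
every Jacobi field arises as the transverse variation of a variation through geodesics. -/
theorem jacobi_field_comes_from_variation_of_geodesics
    {G : Type*} [NormedAddCommGroup G] [InnerProductSpace ℝ G] [FiniteDimensional ℝ G]
    (lie : G →ₗ[ℝ] G →ₗ[ℝ] G)
    (hanti : ∀ u : G, lie u u = 0)
    (hjac : ∀ u v w : G, lie u (lie v w) = lie (lie u v) w + lie v (lie u w))
    (D : G →ₗ[ℝ] G →ₗ[ℝ] G)
    (hD : ∀ u v w : G,
      2 * ⟪D u v, w⟫_ℝ = ⟪lie u v, w⟫_ℝ + ⟪lie w u, v⟫_ℝ + ⟪lie w v, u⟫_ℝ)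
    (α₀ β₀ : ℝ → G) (hα₀ : ContDiff ℝ (⊤ : ℕ∞) α₀) (hβ₀ : ContDiff ℝ (⊤ : ℕ∞) β₀)
    (hgeo : ∀ t ∈ Set.Icc (0 : ℝ) 1, deriv α₀ t = -(D (α₀ t) (α₀ t)))
    (hjacobi : ∀ t ∈ Set.Icc (0 : ℝ) 1,
      covDeriv D α₀ (covDeriv D α₀ β₀) t = curv lie D (α₀ t) (β₀ t) (α₀ t)) :
    ∃ α β : ℝ × ℝ → G, ContDiff ℝ (⊤ : ℕ∞) α ∧ ContDiff ℝ (⊤ : ℕ∞) β ∧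
      (∀ t ∈ Set.Icc (0 : ℝ) 1, α (0, t) = α₀ t ∧ β (0, t) = β₀ t) ∧
      (∀ p : ℝ × ℝ, p.2 ∈ Set.Icc (0 : ℝ) 1 →
        partialT α p = -(D (α p) (α p)) ∧
        partialT β p - partialE α p + lie (α p) (β p) = 0) := by
  have hac : ∀ u v, lie v u = -lie u v := by
    intro u v
    have h := hanti (u + v)
    simp only [map_add, LinearMap.add_apply, hanti, zero_add, add_zero] at h
    exact eq_neg_of_add_eq_zero_left h
  have htor : ∀ u v, lie u v = D u v - D v u := by
    intro u v
    refine ext_inner_right ℝ fun w => ?_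
    have h1 := hD u v w
    have h2 := hD v u w
    rw [hac u v, inner_neg_left] at h2
    rw [inner_sub_left]
    linarith
  have hskew : ∀ u, ⟪u, D u u⟫_ℝ = 0 := by
    intro u
    have h1 := hD u u u
    rw [hanti] at h1
    rw [real_inner_comm]
    simp at h1
    exact h1
  obtain ⟨Dc, hDc⟩ := qf_bilin D
  obtain ⟨Lc, hLc⟩ := qf_bilin lie
  obtain ⟨B, hB⟩ := qf_system lie D
  obtain ⟨w, hw0, hw⟩ := qf_solution lie D hskew B hB (α₀ 0) (deriv β₀ 0 + lie (α₀ 0) (β₀ 0)) (β₀ 0)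
  have hsub : ∀ t ∈ Set.Icc (0:ℝ) 1, t ∈ Set.Ioo (-2:ℝ) 2 := fun t ht =>
    ⟨by linarith [ht.1], by linarith [ht.2]⟩
  have hwd : ∀ ε, ∀ t ∈ Set.Ioo (-2:ℝ) 2, fderiv ℝ w (ε, t) (0, 1) = B (w (ε, t)) (w (ε, t)) := by
    intro ε t ht
    have h1 : HasDerivAt (fun τ : ℝ => (ε, τ)) ((0 : ℝ), (1 : ℝ)) t :=
      (hasDerivAt_const t ε).prodMk (hasDerivAt_id t)
    have h2 := ((hw ε t ht).1.differentiableAt (by simp)).hasFDerivAt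
    exact (HasFDerivAt.comp_hasDerivAt (l := w) t h2 h1).unique (hw ε t ht).2.1
  -- the components
  have hca : ∀ ε, ∀ t ∈ Set.Ioo (-2:ℝ) 2, ContDiffAt ℝ (⊤ : ℕ∞) (fun p => (w p).1) (ε, t) :=
    fun ε t ht => contDiffAt_fst.comp _ (hw ε t ht).1
  have hcb : ∀ ε, ∀ t ∈ Set.Ioo (-2:ℝ) 2, ContDiffAt ℝ (⊤ : ℕ∞) (fun p => (w p).2.2.1) (ε, t) :=
    fun ε t ht => contDiffAt_fst.comp _ (contDiffAt_snd.comp _ (contDiffAt_snd.comp _ (hw ε t ht).1))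
  have hda : ∀ ε, ∀ t ∈ Set.Ioo (-2:ℝ) 2, fderiv ℝ (fun p => (w p).1) (ε, t) (0, 1) =
      -(D (w (ε, t)).1 (w (ε, t)).1) := by
    intro ε t ht
    have h2 := ((hw ε t ht).1.differentiableAt (by simp)).hasFDerivAt
    rw [h2.fst.fderiv]
    change (fderiv ℝ w (ε, t) (0, 1)).1 = _
    rw [hwd ε t ht, hB]
  have hdb : ∀ ε, ∀ t ∈ Set.Ioo (-2:ℝ) 2, fderiv ℝ (fun p => (w p).2.2.1) (ε, t) (0, 1) =
      (w (ε, t)).2.1 - lie (w (ε, t)).1 (w (ε, t)).2.2.1 := by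
    intro ε t ht
    have h2 := ((hw ε t ht).1.differentiableAt (by simp)).hasFDerivAt
    rw [h2.snd.snd.fst.fderiv]
    change (fderiv ℝ w (ε, t) (0, 1)).2.2.1 = _
    rw [hwd ε t ht, hB, (hw ε t ht).2.2, one_smul]
  have hdg : ∀ ε, ∀ t ∈ Set.Ioo (-2:ℝ) 2, HasDerivAt (fun τ => (w (ε, τ)).2.1)
      (-(D (w (ε, t)).2.1 (w (ε, t)).1) - D (w (ε, t)).1 (w (ε, t)).2.1) t := by
    intro ε t ht
    have h1 := (hw ε t ht).2.1.hasFDerivAt.snd.fst.hasDerivAt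
    simpa [hB] using h1
  -- the second component is the `ε`-derivative of the first one
  have hg : ∀ ε, ∀ t ∈ Set.Icc (0:ℝ) 1,
      (w (ε, t)).2.1 - fderiv ℝ (fun p => (w p).1) (ε, t) (1, 0) = 0 := by
    intro ε
    have hy : ∀ t ∈ Set.Ioo (-2:ℝ) 2, HasDerivAt
        (fun τ => (w (ε, τ)).2.1 - fderiv ℝ (fun p => (w p).1) (ε, τ) (1, 0))
        (-(Dc ((w (ε, t)).2.1 - fderiv ℝ (fun p => (w p).1) (ε, t) (1, 0)) (w (ε, t)).1)
          - Dc (w (ε, t)).1 ((w (ε, t)).2.1 - fderiv ℝ (fun p => (w p).1) (ε, t) (1, 0))) t := by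
      intro t ht
      have h1 := qf_variation Dc (fun p => (w p).1)
        (fun ε t ht => ⟨hca ε t ht, by rw [hda ε t ht, hDc]⟩) ε t ht
      have h2 := (hdg ε t ht).sub h1
      convert! h2 using 1
      simp only [hDc, map_sub, sub_apply]
      abel
    have hcw : ContinuousOn (fun τ => (w (ε, τ)).1) (Set.Icc 0 1) := fun t ht =>
      (hw ε t (hsub t ht)).2.1.continuousAt.fst.continuousWithinAt
    obtain ⟨C, hC⟩ := isCompact_Icc.exists_bound_of_continuousOn hcw
    refine eq_zero_of_abs_deriv_le_mul_abs_self_of_eq_zero_right (K := 2 * (‖Dc‖ * C))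
      (fun t ht => (hy t (hsub t ht)).continuousAt.continuousWithinAt)
      (fun t ht => (hy t (hsub t (Set.Ico_subset_Icc_self ht))).hasDerivWithinAt) ?_ ?_
    · have h0 : (0:ℝ) ∈ Set.Ioo (-2:ℝ) 2 := by norm_num
      have h1 : HasDerivAt (fun e : ℝ => (e, (0:ℝ))) ((1 : ℝ), (0 : ℝ)) ε :=
        (hasDerivAt_id ε).prodMk (hasDerivAt_const ε 0)
      have h2 := ((hca ε 0 h0).differentiableAt (by simp)).hasFDerivAt
      have h3 := HasFDerivAt.comp_hasDerivAt (l := fun p => (w p).1) ε h2 h1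
      have h4 : HasDerivAt (fun e : ℝ => (w (e, 0)).1)
          (Real.cos ε • (deriv β₀ 0 + lie (α₀ 0) (β₀ 0))) ε := by
        simp only [hw0]
        exact ((Real.hasDerivAt_sin ε).smul_const _).const_add _
      rw [h3.unique h4, hw0, sub_self]
    · intro t ht
      have hCt := hC t (Set.Ico_subset_Icc_self ht)
      set d := (w (ε, t)).2.1 - fderiv ℝ (fun p => (w p).1) (ε, t) (1, 0)
      have b1 : ‖Dc d (w (ε, t)).1‖ ≤ ‖Dc‖ * ‖d‖ * C := (Dc.le_opNorm₂ _ _).trans (by gcongr)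
      have b2 : ‖Dc (w (ε, t)).1 d‖ ≤ ‖Dc‖ * C * ‖d‖ := (Dc.le_opNorm₂ _ _).trans (by gcongr)
      refine (norm_sub_le _ _).trans ?_
      rw [norm_neg]
      linarith
  -- the given data solve the system
  have hU : ∀ t ∈ Set.Icc (0:ℝ) 1, w (0, t) =
      (α₀ t, deriv β₀ t + lie (α₀ t) (β₀ t), β₀ t, (1:ℝ)) := by
    refine qf_uniq B (fun t => w (0, t)) (fun t => (α₀ t, deriv β₀ t + lie (α₀ t) (β₀ t), β₀ t, (1:ℝ)))
      (fun t ht => (hw 0 t (hsub t ht)).2.1.hasDerivWithinAt) ?_ ?_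
    · intro t ht
      have ha : HasDerivAt α₀ (-(D (α₀ t) (α₀ t))) t := by
        rw [← hgeo t ht]
        exact (hα₀.differentiable (by simp) t).hasDerivAt
      have hb : HasDerivAt β₀ (deriv β₀ t) t := (hβ₀.differentiable (by simp) t).hasDerivAt
      have hb2 : HasDerivAt (deriv β₀) (deriv (deriv β₀) t) t := by
        have h1 : ContDiff ℝ 1 (deriv β₀) := by
          have : ContDiff ℝ (1 + 1) β₀ := hβ₀.of_le (by norm_cast)
          exact (contDiff_succ_iff_deriv.1 this).2.2
        exact (h1.differentiable (by simp) t).hasDerivAt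
      have hDb : HasDerivAt (fun τ => D (α₀ τ) (β₀ τ))
          (D (-(D (α₀ t) (α₀ t))) (β₀ t) + D (α₀ t) (deriv β₀ t)) t := by
        simp only [hDc]
        rw [hDc] at ha
        exact (Dc.hasFDerivAt.comp_hasDerivAt t ha).clm_apply hb
      have hLb : HasDerivAt (fun τ => lie (α₀ τ) (β₀ τ))
          (lie (-(D (α₀ t) (α₀ t))) (β₀ t) + lie (α₀ t) (deriv β₀ t)) t := by
        simp only [hLc]
        exact (Lc.hasFDerivAt.comp_hasDerivAt t ha).clm_apply hb
      have hV : deriv (covDeriv D α₀ β₀) t =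
          deriv (deriv β₀) t + (D (-(D (α₀ t) (α₀ t))) (β₀ t) + D (α₀ t) (deriv β₀ t)) :=
        (hb2.add hDb).deriv
      have hj := hjacobi t ht
      have hj' : deriv (covDeriv D α₀ β₀) t + D (α₀ t) (covDeriv D α₀ β₀ t) =
          curv lie D (α₀ t) (β₀ t) (α₀ t) := hj
      rw [hV] at hj'
      simp only [covDeriv, curv] at hj'
      have hj2 : deriv (deriv β₀) t = D (α₀ t) (D (β₀ t) (α₀ t)) - D (β₀ t) (D (α₀ t) (α₀ t))
          - D (lie (α₀ t) (β₀ t)) (α₀ t) - D (α₀ t) (deriv β₀ t + D (α₀ t) (β₀ t))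
          - (D (-(D (α₀ t) (α₀ t))) (β₀ t) + D (α₀ t) (deriv β₀ t)) := by
        rw [← hj']; abel
      have hG : HasDerivAt (fun τ => deriv β₀ τ + lie (α₀ τ) (β₀ τ))
          (-(D (deriv β₀ t + lie (α₀ t) (β₀ t)) (α₀ t)) -
            D (α₀ t) (deriv β₀ t + lie (α₀ t) (β₀ t))) t := by
        convert! hb2.add hLb using 1
        rw [hj2]
        simp only [htor, map_add, map_sub, map_neg, LinearMap.add_apply, LinearMap.sub_apply,
          LinearMap.neg_apply]
        abel
      have hfin := ha.prodMk (hG.prodMk (hb.prodMk (hasDerivAt_const t (1:ℝ))))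
      rw [hB]
      simpa using hfin.hasDerivWithinAt
    · simp [hw0]
  obtain ⟨α, hα, hαe⟩ := qf_cutoff (fun p => (w p).1) hca
  obtain ⟨β, hβ, hβe⟩ := qf_cutoff (fun p => (w p).2.2.1) hcb
  refine ⟨α, β, hα, hβ, ?_, ?_⟩
  · intro t ht
    rw [(hαe (0, t) ht).eq_of_nhds, (hβe (0, t) ht).eq_of_nhds, hU t ht]
    exact ⟨rfl, rfl⟩
  · rintro ⟨ε, t⟩ ht
    have ht' : t ∈ Set.Icc (0:ℝ) 1 := ht
    unfold partialT partialE
    rw [(hαe (ε, t) ht).fderiv_eq, (hβe (ε, t) ht).fderiv_eq, (hαe (ε, t) ht).eq_of_nhds,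
      (hβe (ε, t) ht).eq_of_nhds, hda ε t (hsub t ht'), hdb ε t (hsub t ht')]
    refine ⟨rfl, ?_⟩
    rw [sub_eq_zero.1 (hg ε t ht')]
    abel
end

section
/- Assume the sectional curvature of (𝔤, ⟨·,·⟩) is everywhere nonpositive, i.e. ⟨R(u,v)u, v⟩ ≥ 0 for all u, v ∈ 𝔤. Then every Jacobi field β along a geodesic α : [0,1] → 𝔤 with β(0) = 0 and β(1) = 0 vanishes identically. -/
open scoped InnerProductSpace

/-- Assume the sectional curvature of `(𝔤, ⟪·,·⟫)` is everywhere
nonpositive, i.e. `⟪R(u,v)u, v⟫ ≥ 0` for all `u v ∈ 𝔤`.  Then every Jacobi field `β`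
along a geodesic `α : [0,1] → 𝔤` with `β 0 = 0` and `β 1 = 0` vanishes identically. -/
theorem jacobi_field_vanishes_of_nonpos_curvature
    {G : Type*} [NormedAddCommGroup G] [InnerProductSpace ℝ G] [FiniteDimensional ℝ G]
    (lie : G →ₗ[ℝ] G →ₗ[ℝ] G)
    (hanti : ∀ u : G, lie u u = 0)
    (hjac : ∀ u v w : G, lie u (lie v w) = lie (lie u v) w + lie v (lie u w))
    (D : G →ₗ[ℝ] G →ₗ[ℝ] G)
    (hD : ∀ u v w : G,
      2 * ⟪D u v, w⟫_ℝ = ⟪lie u v, w⟫_ℝ + ⟪lie w u, v⟫_ℝ + ⟪lie w v, u⟫_ℝ)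
    (hcurv : ∀ u v : G, 0 ≤ ⟪curv lie D u v u, v⟫_ℝ)
    (α : ℝ → G) (hα : ContDiff ℝ (⊤ : ℕ∞) α)
    (hgeo : ∀ t ∈ Set.Icc (0 : ℝ) 1, deriv α t = -(D (α t) (α t)))
    (β : ℝ → G) (hβ : ContDiff ℝ (⊤ : ℕ∞) β)
    (hjacobi : ∀ t ∈ Set.Icc (0 : ℝ) 1,
      covDeriv D α (covDeriv D α β) t = curv lie D (α t) (β t) (α t))
    (h0 : β 0 = 0) (h1 : β 1 = 0) :
    ∀ t ∈ Set.Icc (0 : ℝ) 1, β t = 0 := by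
  have hskew : ∀ u v w : G, ⟪D u v, w⟫_ℝ + ⟪v, D u w⟫_ℝ = 0 := by
    have hs : ∀ u v : G, lie u v = - lie v u := by
      intro u v
      have h := hanti (u + v)
      simp only [map_add, LinearMap.add_apply, hanti, zero_add, add_zero] at h
      rw [add_comm] at h
      exact eq_neg_of_add_eq_zero_left h
    intro u v w
    have e1 := hD u v w
    have e2 := hD u w v
    rw [hs w u, hs w v, inner_neg_left, inner_neg_left] at e1
    rw [hs v u, inner_neg_left] at e2
    rw [real_inner_comm (D u w) v]
    linarith
  have hβd : Differentiable ℝ β := hβ.differentiable (by simp)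
  have hαd : Differentiable ℝ α := hα.differentiable (by simp)
  have hβ'd : Differentiable ℝ (deriv β) := by
    have : ContDiff ℝ 2 β := contDiff_infty.1 hβ 2
    have h2 : ContDiff ℝ (1 + 1) β := by simpa [one_add_one_eq_two] using this
    exact (contDiff_succ_iff_deriv.1 h2).2.2.differentiable (by simp)
  let B : G →L[ℝ] G →L[ℝ] G := LinearMap.toContinuousLinearMap
    ((LinearMap.toContinuousLinearMap : (G →ₗ[ℝ] G) ≃ₗ[ℝ] (G →L[ℝ] G)).toLinearMap ∘ₗ D)
  have hγd : Differentiable ℝ (covDeriv D α β) := by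
    have h : Differentiable ℝ (fun t => deriv β t + B (α t) (β t)) := by fun_prop
    exact h
  set γ := covDeriv D α β with hγ
  have hf : ∀ t, HasDerivAt (fun t => ⟪β t, β t⟫_ℝ) (2 * ⟪β t, γ t⟫_ℝ) t := by
    intro t
    have h := (hβd t).hasDerivAt.inner ℝ (hβd t).hasDerivAt
    refine h.congr_deriv (Eq.symm ?_)
    have e := hskew (α t) (β t) (β t)
    rw [real_inner_comm (β t)] at e
    simp only [hγ, covDeriv, inner_add_right]
    rw [real_inner_comm (β t) (deriv β t)]
    linarith
  have hg : ∀ t, HasDerivAt (fun t => ⟪β t, γ t⟫_ℝ)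
      (⟪γ t, γ t⟫_ℝ + ⟪β t, covDeriv D α γ t⟫_ℝ) t := by
    intro t
    have h := (hβd t).hasDerivAt.inner ℝ (hγd t).hasDerivAt
    refine h.congr_deriv (Eq.symm ?_)
    have e := hskew (α t) (β t) (γ t)
    have e2 : γ t = deriv β t + D (α t) (β t) := rfl
    have e3 : ⟪γ t, γ t⟫_ℝ = ⟪deriv β t, γ t⟫_ℝ + ⟪D (α t) (β t), γ t⟫_ℝ := by
      rw [← inner_add_left, ← e2]
    rw [e3]
    simp only [covDeriv, inner_add_right]
    linarith
  have hmono : MonotoneOn (fun t => ⟪β t, γ t⟫_ℝ) (Set.Icc (0:ℝ) 1) := by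
    apply monotoneOn_of_deriv_nonneg (convex_Icc 0 1)
    · exact fun t _ => (hg t).continuousAt.continuousWithinAt
    · exact fun t _ => (hg t).differentiableAt.differentiableWithinAt
    · intro t ht
      rw [(hg t).deriv, hjacobi t (interior_subset ht), real_inner_comm _ (β t)]
      exact add_nonneg real_inner_self_nonneg (hcurv _ _)
  have hg0 : ∀ t ∈ Set.Icc (0:ℝ) 1, ⟪β t, γ t⟫_ℝ = 0 := by
    intro t ht
    have a := hmono (Set.left_mem_Icc.2 zero_le_one) ht ht.1
    have b := hmono ht (Set.right_mem_Icc.2 zero_le_one) ht.2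
    simp only [h0, h1, inner_zero_left] at a b
    exact le_antisymm b a
  have hanti' : AntitoneOn (fun t => ⟪β t, β t⟫_ℝ) (Set.Icc (0:ℝ) 1) := by
    apply antitoneOn_of_deriv_nonpos (convex_Icc 0 1)
    · exact fun t _ => (hf t).continuousAt.continuousWithinAt
    · exact fun t _ => (hf t).differentiableAt.differentiableWithinAt
    · intro t ht
      rw [(hf t).deriv, hg0 t (interior_subset ht)]
      simp
  intro t ht
  have a := hanti' (Set.left_mem_Icc.2 zero_le_one) ht ht.1
  simp only [h0, inner_zero_left] at a
  exact inner_self_eq_zero.1 (le_antisymm a real_inner_self_nonneg)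
end
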